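/- arXiv:2306.09157 — 6 statements merged into one kernel-verified Lean document; each statement's English description precedes it below -/
import Mathlib

section
/- Let G be a graph on n vertices with average degree d(G) ≥ (log n)^2, and let n be sufficiently large. Then G contains a bipartite subgraph G' such that: (1) the average degree of G' is at least d(G)/(600 log n); (2) G' is 100-almost-regular; (3) G' is a (1/(10 log n))-expander. -/
/-!
The proof builds an almost-regular graph from injections given by Hall's theorem and then passes
to an expanding subgraph of it.

* A maximum cut turns `G` into a bipartite graph losing at most half of every degree
  (`exists_cut`), and a dense subset `U` of it has minimum degree `D` proportional to `d(G)`.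
* A minimal nonempty `A ⊆ U` with `|N(A)| ≤ |A|` satisfies Hall's condition, so there is an
  injection on `A` sending every vertex to one of its neighbours. Deleting these arcs `v ↦ f v` and
  repeating inside `A` gives `D` injections with pairwise disjoint sets of arcs on nested domains
  (`exists_injections`). By pigeonhole at least `k = D / (log₂ n + 1)` of the domains have sizes in
  the same dyadic interval; since they all lie in the largest of them, and the images in its
  neighbourhood, the union of these arcs has average degree at least `k / 4` and maximum degree at
  most `2 k` (`exists_balanced`).
* In any graph, a set `F` maximising `d(F) · |F| ^ (-1 / log n)` induces an expander: if a set `X`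
  with `|X| ≤ |F| / 2` sent out too few edges, then `X` or its complement in `F` would have a
  larger value. Its average degree is at least a third of the original one and its minimum degree
  is at least half of its average degree (`exists_expander`). The maximum degree does not
  increase, so the result stays almost regular.
-/

open Finset
open scoped Classical

/-- The average degree of a graph. -/
noncomputable def avgDeg {V : Type} [Fintype V] (G : SimpleGraph V) : ℝ :=
  (∑ v : V, (G.degree v : ℝ)) / (Fintype.card V : ℝ)

/-- A graph is `K`-almost-regular if its maximum degree is at most `K` times its
minimum degree. -/
noncomputable def AlmostRegular {V : Type} [Fintype V] (K : ℝ) (G : SimpleGraph V) : Prop :=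
  (G.maxDegree : ℝ) ≤ K * (G.minDegree : ℝ)

/-- The number of edges of `G` with one endpoint in `X` and the other outside of `X`. -/
noncomputable def crossCount {V : Type} [Fintype V] (G : SimpleGraph V) (X : Finset V) : ℕ :=
  (G.edgeFinset.filter (fun e => ∃ a ∈ X, ∃ b ∈ Xᶜ, e = s(a, b))).card

/-- `G` is a `lam`-expander: every vertex set `X` with `|X| ≤ n/2` satisfies
`e(X, X̄) ≥ lam · d(G) · |X|`. -/
noncomputable def IsExpander {V : Type} [Fintype V] (lam : ℝ) (G : SimpleGraph V) : Prop :=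
  ∀ X : Finset V, (X.card : ℝ) ≤ (Fintype.card V : ℝ) / 2 →
    (crossCount G X : ℝ) ≥ lam * avgDeg G * (X.card : ℝ)

/-! ### Counting adjacent pairs -/

/-- The number of ordered pairs `(x, y) ∈ X × Y` that are adjacent in `H`, as a real number.
In particular `edgeSum H X X` counts every edge inside `X` twice, so that the average degree of
`H[X]` is `edgeSum H X X / |X|`. -/
noncomputable def edgeSum {V : Type} (H : SimpleGraph V) (X Y : Finset V) : ℝ :=
  ∑ x ∈ X, ∑ y ∈ Y, if H.Adj x y then 1 else 0

lemma edgeSum_comm {V : Type} (H : SimpleGraph V) (X Y : Finset V) :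
    edgeSum H X Y = edgeSum H Y X := by
  unfold edgeSum
  rw [Finset.sum_comm]
  simp only [H.adj_comm]

lemma edgeSum_nonneg {V : Type} (H : SimpleGraph V) (X Y : Finset V) :
    0 ≤ edgeSum H X Y :=
  Finset.sum_nonneg fun _ _ => Finset.sum_nonneg fun _ _ => by split_ifs <;> norm_num

lemma edgeSum_union_left {V : Type} (H : SimpleGraph V) {X Y : Finset V} (h : Disjoint X Y)
    (Z : Finset V) : edgeSum H (X ∪ Y) Z = edgeSum H X Z + edgeSum H Y Z :=
  Finset.sum_union h

lemma edgeSum_union_right {V : Type} (H : SimpleGraph V) {X Y : Finset V} (h : Disjoint X Y)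
    (Z : Finset V) : edgeSum H Z (X ∪ Y) = edgeSum H Z X + edgeSum H Z Y := by
  rw [edgeSum_comm, edgeSum_union_left H h, edgeSum_comm H X, edgeSum_comm H Y]

lemma edgeSum_split {V : Type} (H : SimpleGraph V) {X F : Finset V} (h : X ⊆ F) :
    edgeSum H F F = edgeSum H X X + 2 * edgeSum H X (F \ X) + edgeSum H (F \ X) (F \ X) := by
  have hd : Disjoint X (F \ X) := Finset.disjoint_sdiff
  have hF : X ∪ (F \ X) = F := Finset.union_sdiff_of_subset h
  conv_lhs => rw [← hF]
  rw [edgeSum_union_left H hd, edgeSum_union_right H hd, edgeSum_union_right H hd,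
    edgeSum_comm H (F \ X) X]
  ring

lemma edgeSum_singleton_left {V : Type} (H : SimpleGraph V) (v : V) (Y : Finset V) :
    edgeSum H {v} Y = ((Y.filter (H.Adj v)).card : ℝ) := by
  simp [edgeSum]

lemma edgeSum_singleton_self {V : Type} (H : SimpleGraph V) (v : V) :
    edgeSum H {v} {v} = 0 := by
  simp [edgeSum]

lemma edgeSum_eq_sum {V : Type} (H : SimpleGraph V) (X Y : Finset V) :
    edgeSum H X Y = ∑ x ∈ X, edgeSum H {x} Y := by
  simp [edgeSum]

/-! ### Passing to an expander -/

/-- `U` has a subset `F` inducing an expander of minimum degree at least half its average degree,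
with average degree at least a third of that of `H[U]`. Any `F` maximising
`d(F) · |F| ^ (-1 / L)` over the nonempty subsets of `U` works. -/
lemma exists_expander {V : Type} (H : SimpleGraph V) (U : Finset V) (hU : U.Nonempty)
    (L : ℝ) (hL : 1 ≤ L) (hUL : Real.log U.card ≤ L) :
    ∃ F ⊆ U, F.Nonempty ∧ ∃ d : ℝ, edgeSum H F F = d * F.card ∧ 0 ≤ d ∧
      edgeSum H U U ≤ 3 * d * U.card ∧
      (∀ v ∈ F, d / 2 ≤ edgeSum H {v} F) ∧
      (∀ X ⊆ F, (X.card : ℝ) ≤ F.card / 2 →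
        1 / (10 * L) * d * X.card ≤ edgeSum H X (F \ X)) := by
  have hL0 : 0 < L := by linarith
  obtain ⟨F, hF, hmax⟩ := Finset.exists_max_image (U.powerset.filter Finset.Nonempty)
    (fun X => edgeSum H X X / X.card * Real.exp (-(Real.log X.card / L)))
    ⟨U, by simp [hU]⟩
  simp only [Finset.mem_filter, Finset.mem_powerset] at hF hmax
  obtain ⟨hFU, hFne⟩ := hF
  have hFc : (0 : ℝ) < F.card := by exact_mod_cast hFne.card_pos
  set d : ℝ := edgeSum H F F / F.card with hd
  have hd0 : 0 ≤ d := div_nonneg (edgeSum_nonneg ..) hFc.le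
  have key : ∀ X ⊆ U, ∀ t : ℝ, 0 ≤ t → (X.Nonempty →
      Real.exp ((Real.log X.card - Real.log F.card) / L) ≤ t) →
      edgeSum H X X ≤ t * d * X.card := by
    intro X hX t ht hXt
    rcases X.eq_empty_or_nonempty with rfl | hXne
    · simp [edgeSum]
    have hXc : (0 : ℝ) < X.card := by exact_mod_cast hXne.card_pos
    have h1 := hmax X ⟨hX, hXne⟩
    have h2 : edgeSum H X X / X.card ≤
        d * Real.exp ((Real.log X.card - Real.log F.card) / L) := by
      have h3 := mul_le_mul_of_nonneg_right h1 (Real.exp_pos (Real.log X.card / L)).le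
      rw [mul_assoc, ← Real.exp_add, mul_assoc, ← Real.exp_add] at h3
      simp only [neg_add_cancel, Real.exp_zero, mul_one] at h3
      have h4 : (Real.log X.card - Real.log F.card) / L =
          -(Real.log F.card / L) + Real.log X.card / L := by ring
      rw [h4]
      simpa using h3
    rw [← div_le_iff₀ hXc]
    calc _ ≤ _ := h2
      _ ≤ d * t := mul_le_mul_of_nonneg_left (hXt hXne) hd0
      _ = t * d := mul_comm _ _
  have key1 : ∀ X ⊆ F, edgeSum H X X ≤ d * X.card := by
    intro X hX
    have := key X (hX.trans hFU) 1 zero_le_one fun hne => by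
      rw [Real.exp_le_one_iff]
      refine div_nonpos_of_nonpos_of_nonneg ?_ hL0.le
      have hXc : (0 : ℝ) < X.card := by exact_mod_cast hne.card_pos
      have := Real.log_le_log hXc (by exact_mod_cast Finset.card_le_card hX :
        (X.card : ℝ) ≤ F.card)
      linarith
    linarith
  have hsum : edgeSum H F F = d * F.card := by rw [hd]; field_simp
  refine ⟨F, hFU, hFne, d, hsum, hd0, ?_, ?_, ?_⟩
  · refine key U le_rfl 3 (by norm_num) fun _ => ?_
    have h1 : (Real.log U.card - Real.log F.card) / L ≤ 1 := by
      rw [div_le_one hL0]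
      have := Real.log_natCast_nonneg F.card
      linarith
    have := Real.exp_one_lt_d9
    have := Real.exp_le_exp.2 h1
    linarith
  · intro v hv
    have hs := edgeSum_split H (Finset.singleton_subset_iff.2 hv)
    have h1 := key1 (F \ {v}) Finset.sdiff_subset
    have h2 : ((F \ {v}).card : ℝ) = F.card - 1 := by
      rw [Finset.card_sdiff_of_subset (by simpa using hv)]
      rw [Nat.cast_sub (by simpa using hFne.card_pos)]
      simp
    have h3 : edgeSum H {v} F = edgeSum H {v} (F \ {v}) := by
      conv_lhs => rw [← Finset.union_sdiff_of_subset (Finset.singleton_subset_iff.2 hv)]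
      rw [edgeSum_union_right H Finset.disjoint_sdiff, edgeSum_singleton_self, zero_add]
    rw [h2] at h1
    rw [edgeSum_singleton_self] at hs
    nlinarith
  · intro X hX hXF
    have hs := edgeSum_split H hX
    have h1 := key1 (F \ X) Finset.sdiff_subset
    have h2 : ((F \ X).card : ℝ) = F.card - X.card := by
      rw [Finset.card_sdiff_of_subset hX, Nat.cast_sub (Finset.card_le_card hX)]
    have ht : 0 < 1 / L := by positivity
    have ht1 : 1 / L ≤ 1 := by rw [div_le_one hL0]; exact hL
    -- Halving the vertex set costs a factor `2 ^ (-1 / L) ≤ 1 - 1 / (5 L)`.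
    have h3 := key X (hX.trans hFU) (1 - 1 / 5 * (1 / L)) (by linarith) fun hne => by
      have hXc : (0 : ℝ) < X.card := by exact_mod_cast hne.card_pos
      have h4 := Real.log_le_log hXc hXF
      rw [Real.log_div hFc.ne' (by norm_num)] at h4
      have h5 := Real.log_two_gt_d9
      have h6 : (Real.log X.card - Real.log F.card) / L ≤ -(0.69 * (1 / L)) := by
        rw [div_eq_mul_one_div]
        nlinarith
      refine (Real.exp_le_exp.2 h6).trans ?_
      rw [Real.exp_neg]
      have h7 := Real.add_one_le_exp (0.69 * (1 / L))
      refine (inv_anti₀ (by positivity) h7).trans ?_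
      rw [inv_le_iff_one_le_mul₀ (by positivity)]
      nlinarith
    have h8 : 1 / (10 * L) = 1 / 10 * (1 / L) := by field_simp
    rw [h8]
    rw [h2] at h1
    nlinarith

/-! ### Maximum cuts -/

/-- A cut maximising the number of crossing edges keeps at least half of the degree of every
vertex. -/
lemma exists_cut {V : Type} [Fintype V] (G : SimpleGraph V) :
    ∃ S : Finset V, (∀ v ∈ S, edgeSum G {v} S ≤ edgeSum G {v} Sᶜ) ∧
      ∀ v ∉ S, edgeSum G {v} Sᶜ ≤ edgeSum G {v} S := by
  obtain ⟨S, -, hmax⟩ := Finset.exists_max_image (Finset.univ : Finset (Finset V))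
    (fun S => edgeSum G S Sᶜ) ⟨∅, by simp⟩
  have main : ∀ T : Finset V, (∀ R, edgeSum G R Rᶜ ≤ edgeSum G T Tᶜ) →
      ∀ v ∈ T, edgeSum G {v} T ≤ edgeSum G {v} Tᶜ := by
    intro T hT v hv
    have hT1 := hT (T \ {v})
    have hc : (T \ {v})ᶜ = Tᶜ ∪ {v} := by
      ext x; by_cases hx : x = v <;> simp [hx]
    have hd : Disjoint Tᶜ {v} := by simpa using hv
    have hd' : Disjoint {v} (T \ {v}) := Finset.disjoint_sdiff
    have hu : {v} ∪ (T \ {v}) = T := Finset.union_sdiff_of_subset (by simpa using hv)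
    rw [hc, edgeSum_union_right G hd] at hT1
    have h1 := edgeSum_union_left G hd' Tᶜ
    have h2 := edgeSum_union_right G hd' {v}
    rw [hu] at h1 h2
    rw [edgeSum_singleton_self] at h2
    rw [edgeSum_comm G (T \ {v}) {v}] at hT1
    linarith
  refine ⟨S, main S fun R => hmax R (Finset.mem_univ _), fun v hv => ?_⟩
  have := main Sᶜ (fun R => by
    rw [compl_compl, edgeSum_comm G Sᶜ]; exact hmax R (Finset.mem_univ _)) v (by simpa using hv)
  rwa [compl_compl] at this

/-! ### Almost-regular subgraphs from Hall's theorem -/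

/-- A minimal nonempty `A' ⊆ A` with `|N(A')| ≤ |A'|` satisfies Hall's condition. -/
lemma exists_injection {V : Type} (N : V → Finset V) (A : Finset V) (hA : A.Nonempty)
    (hN : (A.biUnion N).card ≤ A.card) (hne : ∀ v ∈ A, (N v).Nonempty) :
    ∃ A' ⊆ A, A'.Nonempty ∧ (A'.biUnion N).card ≤ A'.card ∧
      ∃ f : V → V, Set.InjOn f A' ∧ ∀ v ∈ A', f v ∈ N v := by
  obtain ⟨A', hA', hmin⟩ := Finset.exists_min_image
    (A.powerset.filter fun X => X.Nonempty ∧ (X.biUnion N).card ≤ X.card) Finset.card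
    ⟨A, by simp [hA, hN]⟩
  simp only [Finset.mem_filter, Finset.mem_powerset] at hA' hmin
  obtain ⟨hA'A, hA'ne, hA'N⟩ := hA'
  refine ⟨A', hA'A, hA'ne, hA'N, ?_⟩
  have hlt : ∀ X ⊆ A', X.Nonempty → X.card < A'.card → X.card < (X.biUnion N).card := by
    intro X hX hXne hXc
    by_contra hcon
    have := hmin X ⟨hX.trans hA'A, hXne, not_lt.1 hcon⟩
    omega
  have hall : ∀ X ⊆ A', X.card ≤ (X.biUnion N).card := by
    intro X hX
    rcases X.eq_empty_or_nonempty with rfl | ⟨v, hv⟩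
    · simp
    rcases (Finset.card_le_card hX).lt_or_eq with hc | hc
    · exact (hlt X hX ⟨v, hv⟩ hc).le
    have hsub : (X.erase v).biUnion N ⊆ X.biUnion N :=
      Finset.biUnion_subset_biUnion_of_subset_left _ (Finset.erase_subset _ _)
    have hce := Finset.card_erase_of_mem hv
    have hpos := Finset.card_pos.2 ⟨v, hv⟩
    rcases (X.erase v).eq_empty_or_nonempty with h0 | h0
    · have : X.card = 1 := by rw [h0] at hce; simp at hce; omega
      rw [this]
      have h1 := Finset.card_le_card (Finset.subset_biUnion_of_mem N hv)
      have h2 := (hne v (hA'A (hX hv))).card_pos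
      omega
    · have h1 := hlt (X.erase v) ((Finset.erase_subset _ _).trans hX) h0 (by omega)
      have h2 := Finset.card_le_card hsub
      omega
  obtain ⟨g, hg, hgN⟩ := (Finset.all_card_le_biUnion_card_iff_exists_injective
    (fun v : A' => N v)).1 fun s => by
      have := hall (s.map (Function.Embedding.subtype _)) (by
        intro x hx; simp at hx; exact hx.1)
      rw [Finset.card_map] at this
      convert this using 2
      ext x; simp
  refine ⟨fun v => if h : v ∈ A' then g ⟨v, h⟩ else v, ?_, ?_⟩
  · intro x hx y hy hxy
    simp only [Finset.mem_coe] at hx hy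
    simp only [hx, hy, dif_pos] at hxy
    simpa using hg hxy
  · intro v hv
    simp only [hv, dif_pos]
    exact hgN ⟨v, hv⟩

/-- Iterating `exists_injection` and deleting `f v` from `N v` after each round produces `D`
arc-disjoint injections `f i : As i → Bs i` between nested sets with `|Bs i| ≤ |As i|`. -/
lemma exists_injections {V : Type} (D : ℕ) : ∀ (N : V → Finset V) (A : Finset V), A.Nonempty →
    (A.biUnion N).card ≤ A.card → (∀ v ∈ A, D ≤ (N v).card) →
    ∃ (As Bs : ℕ → Finset V) (f : ℕ → V → V),
      (∀ i < D, (As i).Nonempty ∧ As i ⊆ A ∧ Bs i ⊆ A.biUnion N ∧ (Bs i).card ≤ (As i).card ∧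
        Set.InjOn (f i) (As i) ∧ ∀ v ∈ As i, f i v ∈ N v ∧ f i v ∈ Bs i) ∧
      ∀ i j, i < j → j < D → As j ⊆ As i ∧ Bs j ⊆ Bs i ∧ ∀ v ∈ As j, f i v ≠ f j v := by
  induction D with
  | zero => exact fun _ _ _ _ _ => ⟨fun _ => ∅, fun _ => ∅, fun _ v => v, by simp, by simp⟩
  | succ D ih =>
    intro N A hA hN hD
    obtain ⟨A', hA'A, hA'ne, hA'N, f₀, hinj, hf₀⟩ := exists_injection N A hA hN fun v hv =>
      Finset.card_pos.1 (by have := hD v hv; omega)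
    have hsub : A'.biUnion (fun v => (N v).erase (f₀ v)) ⊆ A'.biUnion N :=
      Finset.biUnion_mono fun v _ => Finset.erase_subset _ _
    obtain ⟨As, Bs, f, h1, h2⟩ := ih (fun v => (N v).erase (f₀ v)) A' hA'ne
      ((Finset.card_le_card hsub).trans hA'N) fun v hv => by
        rw [Finset.card_erase_of_mem (hf₀ v hv)]
        have := hD v (hA'A hv)
        omega
    have hsub' : A'.biUnion N ⊆ A.biUnion N :=
      Finset.biUnion_subset_biUnion_of_subset_left _ hA'A
    refine ⟨fun i => Nat.casesOn i A' As, fun i => Nat.casesOn i (A'.biUnion N) Bs,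
      fun i => Nat.casesOn i f₀ f, ?_, ?_⟩
    · rintro (_ | i) hi
      · exact ⟨hA'ne, hA'A, hsub', hA'N, hinj, fun v hv =>
          ⟨hf₀ v hv, Finset.mem_biUnion.2 ⟨v, hv, hf₀ v hv⟩⟩⟩
      · obtain ⟨a, b, c, e, g, k⟩ := h1 i (by omega)
        exact ⟨a, b.trans hA'A, (c.trans hsub).trans hsub', e, g, fun v hv =>
          ⟨Finset.mem_of_mem_erase (k v hv).1, (k v hv).2⟩⟩
    · rintro (_ | i) (_ | j) hij hj
      · omega
      · obtain ⟨a, b, c, e, g, k⟩ := h1 j (by omega)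
        exact ⟨b, c.trans hsub, fun v hv => (Finset.ne_of_mem_erase (k v hv).1).symm⟩
      · omega
      · exact h2 i j (by omega) (by omega)

/-- A graph of minimum degree `D` on `U` contains `D` arc-disjoint injections with nested
domains. At least `D / (log₂ |U| + 1)` of these domains have sizes in a common dyadic interval;
if there are `k` of them, the union `H` of their arcs has maximum degree at most `2 k` and average
degree at least `k / 4` on `S`, the largest of the domains together with its neighbourhood. -/
lemma exists_balanced {V : Type} (G : SimpleGraph V) (U : Finset V) (hU : U.Nonempty) (D : ℕ)
    (hD0 : 0 < D) (hD : ∀ v ∈ U, D ≤ (U.filter (G.Adj v)).card) :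
    ∃ (H : SimpleGraph V) (S : Finset V) (k : ℕ), H ≤ G ∧ S ⊆ U ∧ S.Nonempty ∧ 0 < k ∧
      (D : ℝ) ≤ (Nat.log 2 U.card + 1) * k ∧
      (∀ v, ∀ T : Finset V, edgeSum H {v} T ≤ 2 * k) ∧
      (k : ℝ) * S.card ≤ 4 * edgeSum H S S := by
  have hsubU : U.biUnion (fun v => U.filter (G.Adj v)) ⊆ U :=
    Finset.biUnion_subset.2 fun v _ => Finset.filter_subset _ _
  obtain ⟨As, Bs, f, h1, h2⟩ := exists_injections D (fun v => U.filter (G.Adj v)) U hU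
    (Finset.card_le_card hsubU) hD
  obtain ⟨l, -, hl⟩ := Finset.exists_le_card_fiber_of_nsmul_le_card_of_maps_to
    (s := Finset.range D) (t := Finset.range (Nat.log 2 U.card + 1))
    (f := fun i => Nat.log 2 (As i).card) (b := (D : ℝ) / (Nat.log 2 U.card + 1))
    (fun i hi => by
      have := Finset.card_le_card (h1 i (Finset.mem_range.1 hi)).2.1
      have := Nat.log_mono_right (b := 2) this
      simp only [Finset.mem_range]
      omega)
    ⟨0, by simp⟩
    (by
      simp only [Finset.card_range, nsmul_eq_mul, Nat.cast_add, Nat.cast_one]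
      rw [mul_div_cancel₀]
      positivity)
  set I := (Finset.range D).filter fun i => Nat.log 2 (As i).card = l with hI
  have hmemI : ∀ i ∈ I, i < D ∧ Nat.log 2 (As i).card = l := fun i hi => by
    simpa [hI] using hi
  have hIc : 0 < I.card := by
    have : (0 : ℝ) < (D : ℝ) / (Nat.log 2 U.card + 1) := by
      have : (0 : ℝ) < D := by exact_mod_cast hD0
      positivity
    exact_mod_cast this.trans_le hl
  obtain ⟨m, hmI, hm⟩ := Finset.exists_min_image I id (Finset.card_pos.1 hIc)
  obtain ⟨hmD, hml⟩ := hmemI m hmI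
  have hAm : ∀ i ∈ I, As i ⊆ As m ∧ Bs i ⊆ Bs m := by
    intro i hi
    rcases (hm i hi).lt_or_eq with h | h
    · have := h2 m i h (hmemI i hi).1
      exact ⟨this.1, this.2.1⟩
    · simp only [id] at h
      subst h
      exact ⟨le_rfl, le_rfl⟩
  have hfadj : ∀ i ∈ I, ∀ v ∈ As i, G.Adj v (f i v) := by
    intro i hi v hv
    have := ((h1 i (hmemI i hi).1).2.2.2.2.2 v hv).1
    simpa using (Finset.mem_filter.1 this).2
  obtain ⟨H, hH⟩ : ∃ H : SimpleGraph V, ∀ x y, H.Adj x y ↔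
      ∃ i ∈ I, (x ∈ As i ∧ f i x = y) ∨ (y ∈ As i ∧ f i y = x) :=
    ⟨{ Adj := fun x y => ∃ i ∈ I, (x ∈ As i ∧ f i x = y) ∨ (y ∈ As i ∧ f i y = x)
       symm := ⟨by
        rintro x y ⟨i, hi, h | h⟩
        · exact ⟨i, hi, Or.inr h⟩
        · exact ⟨i, hi, Or.inl h⟩⟩
       loopless := ⟨by
        rintro x ⟨i, hi, ⟨h, h'⟩ | ⟨h, h'⟩⟩ <;>
        · have := hfadj i hi x h
          rw [h'] at this
          exact G.loopless.irrefl x this⟩ }, fun _ _ => Iff.rfl⟩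
  have hHG : H ≤ G := by
    intro x y hxy
    obtain ⟨i, hi, ⟨h, rfl⟩ | ⟨h, rfl⟩⟩ := (hH x y).1 hxy
    · exact hfadj i hi x h
    · exact (hfadj i hi y h).symm
  refine ⟨H, As m ∪ Bs m, I.card, hHG, ?_, ?_, hIc, ?_, ?_, ?_⟩
  · exact Finset.union_subset (h1 m hmD).2.1 ((h1 m hmD).2.2.1.trans hsubU)
  · exact (h1 m hmD).1.mono Finset.subset_union_left
  · rw [div_le_iff₀ (by positivity)] at hl
    linarith
  -- A vertex has at most one out-neighbour and one in-neighbour per injection.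
  · intro v T
    rw [edgeSum_singleton_left]
    have hsub : T.filter (H.Adj v) ⊆ I.image (fun i => f i v) ∪
        I.biUnion (fun i => (As i).filter fun y => f i y = v) := by
      intro y hy
      obtain ⟨i, hi, ⟨h, rfl⟩ | ⟨h, h'⟩⟩ := (hH v y).1 (Finset.mem_filter.1 hy).2
      · exact Finset.mem_union_left _ (Finset.mem_image.2 ⟨i, hi, rfl⟩)
      · exact Finset.mem_union_right _
          (Finset.mem_biUnion.2 ⟨i, hi, Finset.mem_filter.2 ⟨h, h'⟩⟩)
    have hb : (I.biUnion (fun i => (As i).filter fun y => f i y = v)).card ≤ I.card * 1 := by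
      refine Finset.card_biUnion_le_card_mul _ _ _ fun i hi => Finset.card_le_one.2 ?_
      intro a ha b hb
      rw [Finset.mem_filter] at ha hb
      exact (h1 i (hmemI i hi).1).2.2.2.2.1 ha.1 hb.1 (ha.2.trans hb.2.symm)
    have hc := Finset.card_le_card hsub
    have hu := Finset.card_union_le (I.image (fun i => f i v))
      (I.biUnion (fun i => (As i).filter fun y => f i y = v))
    have hi := Finset.card_image_le (s := I) (f := fun i => f i v)
    have : (T.filter (H.Adj v)).card ≤ 2 * I.card := by omega
    exact_mod_cast this
  -- Counting out-neighbours only, the degrees add up to at least the total size of the domains.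
  · have hdeg : ∀ v ∈ As m ∪ Bs m,
        (((I.filter fun i => v ∈ As i).card : ℕ) : ℝ) ≤ edgeSum H {v} (As m ∪ Bs m) := by
      intro v _
      rw [edgeSum_singleton_left]
      norm_cast
      refine Finset.card_le_card_of_injOn (fun i => f i v) ?_ ?_
      · intro i hi
        obtain ⟨hi, hv⟩ := Finset.mem_filter.1 hi
        refine Finset.mem_coe.2 (Finset.mem_filter.2 ⟨Finset.mem_union_right _ ?_,
          (hH _ _).2 ⟨i, hi, Or.inl ⟨hv, rfl⟩⟩⟩)
        exact (hAm i hi).2 ((h1 i (hmemI i hi).1).2.2.2.2.2 v hv).2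
      · intro i hi j hj hij
        obtain ⟨hi, hvi⟩ := Finset.mem_filter.1 hi
        obtain ⟨hj, hvj⟩ := Finset.mem_filter.1 hj
        rcases lt_trichotomy i j with h | h | h
        · exact absurd hij ((h2 i j h (hmemI j hj).1).2.2 v hvj)
        · exact h
        · exact absurd hij.symm ((h2 j i h (hmemI i hi).1).2.2 v hvi)
    have hsum : ∑ v ∈ As m ∪ Bs m, (I.filter fun i => v ∈ As i).card = ∑ i ∈ I, (As i).card := by
      simp only [Finset.card_filter]
      rw [Finset.sum_comm]
      refine Finset.sum_congr rfl fun i hi => ?_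
      rw [← Finset.card_filter, Finset.filter_mem_eq_inter,
        Finset.inter_eq_right.2 ((hAm i hi).1.trans Finset.subset_union_left)]
    have hlow : ∀ i ∈ I, 2 ^ l ≤ (As i).card := fun i hi => by
      rw [← (hmemI i hi).2]
      exact Nat.pow_log_le_self 2 (h1 i (hmemI i hi).1).1.card_pos.ne'
    have hup : (As m).card < 2 ^ (l + 1) := by
      rw [← hml]
      exact Nat.lt_pow_succ_log_self (by norm_num) _
    have h3 : I.card * 2 ^ l ≤ ∑ i ∈ I, (As i).card := by
      simpa using Finset.card_nsmul_le_sum I _ _ hlow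
    have h4 : (As m ∪ Bs m).card ≤ 4 * 2 ^ l := by
      have := Finset.card_union_le (As m) (Bs m)
      have := (h1 m hmD).2.2.2.1
      rw [pow_succ] at hup
      omega
    have h5 : I.card * (As m ∪ Bs m).card ≤
        4 * ∑ v ∈ As m ∪ Bs m, (I.filter fun i => v ∈ As i).card := by
      rw [hsum]
      nlinarith [Nat.mul_le_mul_left I.card h4]
    have h6 := Finset.sum_le_sum hdeg
    rw [← edgeSum_eq_sum] at h6
    have h7 : (I.card : ℝ) * (As m ∪ Bs m).card ≤
        4 * ∑ v ∈ As m ∪ Bs m, (((I.filter fun i => v ∈ As i).card : ℕ) : ℝ) := by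
      exact_mod_cast h5
    linarith

/-! ### Induced subgraphs on a subtype -/

lemma almostRegular_of_degree_le {V : Type} [Fintype V] [Nonempty V] {K : ℝ} (G : SimpleGraph V)
    (h : ∀ v w, (G.degree v : ℝ) ≤ K * G.degree w) : AlmostRegular K G := by
  obtain ⟨v, hv⟩ := G.exists_minimal_degree_vertex
  obtain ⟨w, hw⟩ := G.exists_maximal_degree_vertex
  unfold AlmostRegular
  rw [hv, hw]
  exact h w v

lemma degree_comap {V : Type} (H : SimpleGraph V) (F : Finset V) (v : ↥F)
    [Fintype ((H.comap (Subtype.val : ↥F → V)).neighborSet v)] :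
    ((H.comap (Subtype.val : ↥F → V)).degree v : ℝ) = edgeSum H {(v : V)} F := by
  rw [edgeSum_singleton_left, ← SimpleGraph.card_neighborFinset_eq_degree]
  norm_cast
  rw [← Finset.card_map (Function.Embedding.subtype _)]
  congr 1
  ext x
  simp [and_comm]

lemma avgDeg_comap {V : Type} (H : SimpleGraph V) (F : Finset V) :
    avgDeg (H.comap (Subtype.val : ↥F → V)) = edgeSum H F F / F.card := by
  unfold avgDeg
  simp only [degree_comap, Fintype.card_coe]
  rw [edgeSum_eq_sum, ← Finset.sum_coe_sort F (fun v => edgeSum H {v} F)]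

/-- Sending `(a, b) ∈ X × Xᶜ` to `s(a, b)` is injective. -/
lemma crossCount_comap {V : Type} (H : SimpleGraph V) (F : Finset V) (X : Finset ↥F) :
    edgeSum H (X.map (Function.Embedding.subtype _)) (F \ X.map (Function.Embedding.subtype _)) ≤
      (crossCount (H.comap (Subtype.val : ↥F → V)) X : ℝ) := by
  have h1 : edgeSum H (X.map (Function.Embedding.subtype _))
      (F \ X.map (Function.Embedding.subtype _)) =
      (((X ×ˢ Xᶜ).filter fun p : ↥F × ↥F => H.Adj p.1 p.2).card : ℝ) := by
    have h2 : F \ X.map (Function.Embedding.subtype _) =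
        Xᶜ.map (Function.Embedding.subtype _) := by
      ext x
      simp only [Finset.mem_sdiff, Finset.mem_map, Finset.mem_compl]
      constructor
      · rintro ⟨hx, hn⟩
        exact ⟨⟨x, hx⟩, fun h => hn ⟨_, h, rfl⟩, rfl⟩
      · rintro ⟨y, hy, rfl⟩
        refine ⟨y.2, ?_⟩
        rintro ⟨z, hz, hzy⟩
        exact hy (by rwa [← Subtype.ext hzy])
    rw [h2, Finset.card_filter, Finset.sum_product]
    simp only [edgeSum, Finset.sum_map, Function.Embedding.subtype_apply, Nat.cast_sum,
      Nat.cast_ite, Nat.cast_one, Nat.cast_zero]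
    congr!
  rw [h1]
  unfold crossCount
  norm_cast
  refine Finset.card_le_card_of_injOn (fun p => s(p.1, p.2)) ?_ ?_
  · rintro ⟨a, b⟩ hp
    simp only [Finset.coe_filter, Finset.mem_product, Set.mem_ofPred_eq] at hp
    simp only [Finset.coe_filter, Set.mem_ofPred_eq, SimpleGraph.mem_edgeFinset,
      SimpleGraph.mem_edgeSet, SimpleGraph.comap_adj]
    exact ⟨hp.2, a, hp.1.1, b, by simpa using hp.1.2, rfl⟩
  · rintro ⟨a, b⟩ hp ⟨a', b'⟩ hp' h
    simp only [Finset.coe_filter, Finset.mem_product, Set.mem_ofPred_eq,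
      Finset.mem_compl] at hp hp'
    rcases Sym2.eq_iff.1 h with ⟨rfl, rfl⟩ | ⟨rfl, rfl⟩
    · rfl
    · exact absurd hp.1.1 hp'.1.2

/-! ### Combining the steps -/

/-- For `n` sufficiently large, every graph `G` on `n` vertices with average
degree at least `(log n)^2` contains a bipartite subgraph `G'` (on a vertex set `s`, with
edges a subset of those of `G`) whose average degree is at least `d(G)/(600 log n)`, which is
`100`-almost-regular, and which is a `1/(10 log n)`-expander. -/
theorem stmt_1 :
    ∃ n₀ : ℕ, ∀ n : ℕ, n₀ ≤ n → ∀ (V : Type) [Fintype V], Fintype.card V = n →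
      ∀ G : SimpleGraph V, (Real.log n) ^ 2 ≤ avgDeg G →
        ∃ (s : Finset V) (G' : SimpleGraph ↥s),
          (∀ a b : ↥s, G'.Adj a b → G.Adj (a : V) (b : V)) ∧
          G'.Colorable 2 ∧
          avgDeg G / (600 * Real.log n) ≤ avgDeg G' ∧
          AlmostRegular 100 G' ∧
          IsExpander (1 / (10 * Real.log n)) G' := by
  refine ⟨3, fun n hn V _ hV G hG => ?_⟩
  have hn3 : (3 : ℝ) ≤ n := by exact_mod_cast hn
  have hL : 1 ≤ Real.log n := by
    rw [Real.le_log_iff_exp_le (by linarith)]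
    have := Real.exp_one_lt_d9
    linarith
  set L := Real.log n with hLdef
  have hd0 : 0 < avgDeg G := by nlinarith
  have hmono : ∀ T : Finset V, T.Nonempty → Real.log T.card ≤ L := fun T hT =>
    Real.log_le_log (by exact_mod_cast hT.card_pos)
      (by rw [← hV]; exact_mod_cast Finset.card_le_univ T)
  have : Nonempty V := Fintype.card_pos_iff.1 (by omega)
  have hGsum : edgeSum G Finset.univ Finset.univ = avgDeg G * n := by
    have hn0 : (n : ℝ) ≠ 0 := by linarith
    unfold avgDeg
    rw [hV, div_mul_cancel₀ _ hn0, edgeSum_eq_sum]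
    refine Finset.sum_congr rfl fun v _ => ?_
    rw [edgeSum_singleton_left, ← SimpleGraph.card_neighborFinset_eq_degree,
      SimpleGraph.neighborFinset_eq_filter]
  obtain ⟨S, hS1, hS2⟩ := exists_cut G
  -- The bipartite subgraph of `G` formed by the edges crossing the cut.
  let G₁ : SimpleGraph V :=
    { Adj := fun x y => G.Adj x y ∧ ¬ (x ∈ S ↔ y ∈ S)
      symm := ⟨fun x y h => ⟨h.1.symm, fun h' => h.2 h'.symm⟩⟩
      loopless := ⟨fun x h => h.2 Iff.rfl⟩ }
  have hG₁deg : ∀ v, edgeSum G {v} Finset.univ ≤ 2 * edgeSum G₁ {v} Finset.univ := by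
    intro v
    have hu := edgeSum_union_right G (disjoint_compl_right (a := S)) {v}
    rw [Finset.union_compl] at hu
    by_cases hv : v ∈ S
    · have h1 : edgeSum G₁ {v} Finset.univ = edgeSum G {v} Sᶜ := by
        rw [edgeSum_singleton_left, edgeSum_singleton_left]
        congr 2
        ext x
        simp [G₁, hv, and_comm]
      have := hS1 v hv
      linarith
    · have h1 : edgeSum G₁ {v} Finset.univ = edgeSum G {v} S := by
        rw [edgeSum_singleton_left, edgeSum_singleton_left]
        congr 2
        ext x
        simp [G₁, hv, and_comm]
      have := hS2 v hv
      linarith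
  have hG₁sum : avgDeg G * n ≤ 2 * edgeSum G₁ Finset.univ Finset.univ := by
    rw [← hGsum, edgeSum_eq_sum, edgeSum_eq_sum G₁, Finset.mul_sum]
    exact Finset.sum_le_sum fun v _ => hG₁deg v
  obtain ⟨U, -, hUne, d₁, -, -, hd₁, hmin₁, -⟩ :=
    exists_expander G₁ Finset.univ Finset.univ_nonempty L hL (hmono _ Finset.univ_nonempty)
  have hd₁' : avgDeg G ≤ 6 * d₁ := by
    rw [Finset.card_univ, hV] at hd₁
    have : avgDeg G * n ≤ 6 * d₁ * n := by linarith
    exact le_of_mul_le_mul_right this (by linarith)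
  obtain ⟨H, T, k, hHG, -, hTne, hk0, hDk, hmax, hHsum⟩ :=
    exists_balanced G₁ U hUne ⌈d₁ / 2⌉₊ (Nat.ceil_pos.2 (by linarith)) fun v hv => by
      rw [Nat.ceil_le]
      simpa only [edgeSum_singleton_left] using hmin₁ v hv
  obtain ⟨F, -, hFne, d, hdF, -, hdT, hmin, hexp⟩ :=
    exists_expander H T hTne L hL (hmono T hTne)
  have hFc : (0 : ℝ) < F.card := by exact_mod_cast hFne.card_pos
  have hTc : (0 : ℝ) < T.card := by exact_mod_cast hTne.card_pos
  have hk0' : (0 : ℝ) < k := by exact_mod_cast hk0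
  have hkd : (k : ℝ) ≤ 12 * d := by
    have : (k : ℝ) * T.card ≤ 12 * d * T.card := by linarith
    exact le_of_mul_le_mul_right this hTc
  have havg : avgDeg (H.comap (Subtype.val : ↥F → V)) = d := by
    rw [avgDeg_comap, hdF, mul_div_cancel_right₀ _ hFc.ne']
  refine ⟨F, H.comap Subtype.val, fun a b h => (hHG h).1, ?_, ?_, ?_, ?_⟩
  · refine ⟨SimpleGraph.Coloring.mk
      (fun v : ↥F => if (v : V) ∈ S then (0 : Fin 2) else 1) ?_⟩
    intro a b hab
    have := (hHG hab).2
    by_cases ha : (a : V) ∈ S <;> by_cases hb : (b : V) ∈ S <;> simp_all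
  · rw [havg, div_le_iff₀ (by linarith)]
    have hlog : (Nat.log 2 U.card : ℝ) ≤ 3 / 2 * L := by
      have h1 : Real.log ((2 : ℝ) ^ Nat.log 2 U.card) ≤ Real.log U.card := by
        refine Real.log_le_log (by positivity) ?_
        exact_mod_cast Nat.pow_log_le_self 2 hUne.card_pos.ne'
      rw [Real.log_pow] at h1
      have h2 := hmono U hUne
      have h3 := Real.log_two_gt_d9
      have h4 : (0 : ℝ) ≤ Nat.log 2 U.card := by positivity
      nlinarith
    have h1 : d₁ / 2 ≤ (Nat.log 2 U.card + 1) * k := (Nat.le_ceil _).trans hDk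
    have h2 : ((Nat.log 2 U.card : ℝ) + 1) * k ≤ (5 / 2 * L) * (12 * d) :=
      mul_le_mul (by linarith) hkd hk0'.le (by linarith)
    have h3 : 0 ≤ L * d := by nlinarith
    nlinarith
  · have : Nonempty ↥F := hFne.to_subtype
    refine almostRegular_of_degree_le _ fun v w => ?_
    rw [degree_comap, degree_comap]
    have h1 := hmax v F
    have h2 := hmin w w.2
    linarith
  · intro X hX
    rw [havg]
    refine le_trans ?_ (crossCount_comap H F X)
    have := hexp (X.map (Function.Embedding.subtype _)) (by
      intro x hx; simp at hx; exact hx.1) (by simpa using hX)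
    simpa using this
end

section
/- Let λ > 0, let H be a graph, and let U ⊆ V(H) be a nonempty set with |U| ≤ |V(H)|/2 such that e(U, V(H)∖U) < (λ/3)·d(H)·|U|. Then either the average degree of the induced subgraph H[V(H)∖U] is at least d(H), or the average degree of the induced subgraph H[U] is at least (1−λ)·d(H). -/
/-!
Write `d` for the average degree, `n` for the number of vertices and `u` for `|U|`. The degree sum
`d * n` splits as the degree sum of `H[U]`, plus that of `H[Uᶜ]`, plus `2 * e(U, Uᶜ)`
(`degSum_split`). If both alternatives failed, these would be less than `(1 - lam) * d * u`,
`d * (n - u)` and `(2 / 3) * lam * d * u` respectively, so that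
`d * n < d * n - lam * d * u / 3`, which is absurd because `lam * d * u ≥ 0`.
-/

open Finset
open scoped Classical

/-- The number of edges of `H` with one endpoint in `A` and the other in `B`. -/
noncomputable def eBetween {V : Type} [Fintype V] (H : SimpleGraph V) (A B : Finset V) : ℕ :=
  (H.edgeFinset.filter (fun e => ∃ a ∈ A, ∃ b ∈ B, e = s(a, b))).card

/-- The number of ordered pairs `(a, b)` of adjacent vertices with `a ∈ A` and `b ∈ B`. -/
noncomputable def adjPairs {V : Type} (H : SimpleGraph V) (A B : Finset V) : ℝ :=
  ∑ a ∈ A, ∑ b ∈ B, if H.Adj a b then 1 else 0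

lemma degree_eq_sum {V : Type} [Fintype V] (H : SimpleGraph V) (v : V)
    [Fintype (H.neighborSet v)] :
    (H.degree v : ℝ) = ∑ w : V, if H.Adj v w then 1 else 0 := by
  rw [Finset.sum_boole, ← SimpleGraph.card_neighborFinset_eq_degree]
  congr 2
  ext w
  simp

lemma avgDeg_mul_card {V : Type} [Fintype V] (H : SimpleGraph V) [Nonempty V] :
    avgDeg H * (Fintype.card V : ℝ) = adjPairs H univ univ := by
  have h : (Fintype.card V : ℝ) ≠ 0 := by exact_mod_cast Fintype.card_ne_zero
  unfold avgDeg adjPairs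
  rw [div_mul_cancel₀ _ h]
  exact Finset.sum_congr rfl fun v _ => degree_eq_sum H v

lemma avgDeg_induce_mul_card {V : Type} (H : SimpleGraph V) (S : Finset V)
    [Fintype (↑S : Set V)] (hS : S.Nonempty) :
    avgDeg (H.induce (↑S : Set V)) * (S.card : ℝ) = adjPairs H S S := by
  have : Nonempty (↑S : Set V) := hS.to_subtype
  have hc : S.card = Fintype.card (↑S : Set V) := by
    rw [← Nat.card_eq_fintype_card]
    simp
  rw [hc, avgDeg_mul_card]
  unfold adjPairs
  -- A sum over `S` is the same as a sum over the vertex type of the induced subgraph.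
  have key : ∀ f : V → ℝ, ∑ v : (↑S : Set V), f v = ∑ v ∈ S, f v := fun f =>
    (Finset.sum_subtype S (fun x => by simp) f).symm
  simp only [SimpleGraph.comap_adj, Function.Embedding.subtype_apply]
  rw [← key]
  exact Finset.sum_congr rfl fun v _ => key fun w => if H.Adj v w then 1 else 0

/-- For disjoint sets each edge between them arises from exactly one ordered pair. -/
lemma eBetween_eq_adjPairs {V : Type} [Fintype V] (H : SimpleGraph V) (A B : Finset V)
    (hAB : Disjoint A B) : (eBetween H A B : ℝ) = adjPairs H A B := by
  unfold adjPairs eBetween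
  rw [← Finset.sum_product', Finset.sum_boole]
  congr 1
  symm
  refine Finset.card_bij (fun p _ => s(p.1, p.2)) ?_ ?_ ?_
  · rintro ⟨a, b⟩ h
    simp only [mem_filter, mem_product] at h
    simp only [mem_filter, SimpleGraph.mem_edgeFinset, SimpleGraph.mem_edgeSet]
    exact ⟨h.2, a, h.1.1, b, h.1.2, rfl⟩
  · rintro ⟨a, b⟩ h ⟨c, d⟩ h' heq
    simp only [mem_filter, mem_product] at h h'
    rcases Sym2.eq_iff.1 heq with ⟨rfl, rfl⟩ | ⟨rfl, rfl⟩
    · rfl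
    · exact absurd h'.1.2 (Finset.disjoint_left.1 hAB h.1.1)
  · intro e he
    simp only [mem_filter, SimpleGraph.mem_edgeFinset] at he
    obtain ⟨hadj, a, ha, b, hb, rfl⟩ := he
    exact ⟨(a, b), by simpa [ha, hb] using hadj, rfl⟩

lemma adjPairs_comm {V : Type} (H : SimpleGraph V) (A B : Finset V) :
    adjPairs H A B = adjPairs H B A := by
  unfold adjPairs
  rw [Finset.sum_comm]
  simp only [H.adj_comm]

lemma degSum_split {V : Type} [Fintype V] (H : SimpleGraph V) (U : Finset V) :
    adjPairs H univ univ = adjPairs H U U + adjPairs H Uᶜ Uᶜ + 2 * (eBetween H U Uᶜ : ℝ) := by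
  have h : adjPairs H univ univ =
      adjPairs H U U + adjPairs H U Uᶜ + (adjPairs H Uᶜ U + adjPairs H Uᶜ Uᶜ) := by
    unfold adjPairs
    simp only [← Finset.sum_add_distrib, Finset.sum_add_sum_compl]
  rw [h, eBetween_eq_adjPairs H U Uᶜ disjoint_compl_right, adjPairs_comm H Uᶜ U]
  ring

/-- Let `lam > 0` and let `U` be a nonempty vertex set of a graph `H` with
`|U| ≤ |V(H)|/2` and `e(U, Ū) < (lam/3)·d(H)·|U|`. Then either `d(H[Ū]) ≥ d(H)` or
`d(H[U]) ≥ (1 − lam)·d(H)`. -/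
theorem stmt_2 {V : Type} [Fintype V] (lam : ℝ) (hlam : 0 < lam) (H : SimpleGraph V)
    (U : Finset V) (hU : U.Nonempty) (hUhalf : (U.card : ℝ) ≤ (Fintype.card V : ℝ) / 2)
    (hcut : (eBetween H U Uᶜ : ℝ) < lam / 3 * avgDeg H * (U.card : ℝ)) :
    avgDeg H ≤ avgDeg (H.induce ((↑(Uᶜ) : Set V))) ∨
    (1 - lam) * avgDeg H ≤ avgDeg (H.induce ((↑U : Set V))) := by
  by_contra! hcon
  obtain ⟨h1, h2⟩ := hcon
  have : Nonempty V := ⟨hU.choose⟩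
  have hu : (0 : ℝ) < U.card := by exact_mod_cast hU.card_pos
  have hsum : (U.card : ℝ) + (Uᶜ.card : ℝ) = Fintype.card V := by
    exact_mod_cast Finset.card_add_card_compl U
  -- The complement is nonempty since `|U| ≤ |V| / 2`, so its average degree is not a junk value.
  have hc : (0 : ℝ) < Uᶜ.card := by linarith
  have hne : (Uᶜ).Nonempty := Finset.card_pos.1 (by exact_mod_cast hc)
  have hd : 0 ≤ avgDeg H := by unfold avgDeg; positivity
  have e0 := avgDeg_mul_card H
  have e1 := avgDeg_induce_mul_card H U hU
  have e2 := avgDeg_induce_mul_card H Uᶜ hne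
  have hs := degSum_split H U
  have m1 := mul_lt_mul_of_pos_right h1 hc
  have m2 := mul_lt_mul_of_pos_right h2 hu
  have hpos : 0 ≤ lam * avgDeg H * (U.card : ℝ) := by positivity
  rw [e2] at m1
  rw [e1] at m2
  rw [← hsum] at e0
  linarith
end

section
/- Every graph G on n ≥ 2 vertices contains a nonempty 6-almost-regular subgraph G' ⊆ G whose average degree is at least d(G)/(100 log n). -/
/-!
The subgraph is a union of matchings of comparable size, in the spirit of Pyber.

Let `d` be the average degree and `n` the number of vertices. Passing to an induced subgraph of
minimum degree at least `d / 2` (`exists_minDeg`) and then to a maximum cut of it (`exists_cut`)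
gives disjoint sets `A`, `B` with `|B| ≤ |A|` in which every vertex of `A` has at least `d / 4`
neighbours in `B`. Only the degrees on the larger side matter: Hall's theorem, applied to a minimal
`A' ⊆ A` whose neighbourhood in `B` is no larger than `A'`, gives a matching of `A'` onto its whole
neighbourhood (`exists_tight_matching`). After deleting this matching each vertex of `A'` has lost
one neighbour, and the argument can be repeated between the two matched sets. This produces
`t = ⌈d / 4⌉` edge-disjoint matchings with nested vertex sets (`exists_nested_matchings`).

The sizes of the matchings fall into at most `⌊log₂ n⌋ + 1` dyadic intervals, so some `k` of them,
with `k ≥ t / (⌊log₂ n⌋ + 1)`, have sizes in one interval `[2 ^ j, 2 ^ (j + 1))`. Their union has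
maximum degree at most `k`, at least `k * 2 ^ j` edges and, by nestedness, at most `4 * 2 ^ j`
vertices, so its average degree is at least `k / 2` and it has an induced subgraph of minimum degree
at least `k / 4` (`exists_subset_deg_bounds`). That subgraph is even `4`-almost-regular, and its
average degree is at least `k / 4 ≥ d / (100 log n)` because `⌊log₂ n⌋ + 1 ≤ (25 / 4) log n`
(`natLog_bound`).
-/

open Finset
open scoped Classical

/-! ### Degrees inside a vertex set -/

/-- The number of neighbours of `v` in `U` under the relation `r`. -/
noncomputable def degIn {V : Type} (r : V → V → Prop) (U : Finset V) (v : V) : ℕ :=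
  (U.filter (r v)).card

theorem sum_degIn_comm {V : Type} (r : V → V → Prop) (hr : ∀ a b, r a b → r b a)
    (X Y : Finset V) : ∑ a ∈ X, degIn r Y a = ∑ b ∈ Y, degIn r X b := by
  have h := Finset.sum_card_bipartiteAbove_eq_sum_card_bipartiteBelow (s := X) (t := Y) r
  have e : ∀ b, X.filter (fun a => r a b) = X.filter (r b) := fun b =>
    Finset.filter_congr fun a _ => ⟨hr a b, hr b a⟩
  simpa only [Finset.bipartiteAbove, Finset.bipartiteBelow, e, degIn] using h

theorem degIn_union {V : Type} (r : V → V → Prop) {X Y : Finset V} (h : Disjoint X Y) (v : V) :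
    degIn r (X ∪ Y) v = degIn r X v + degIn r Y v := by
  unfold degIn
  rw [Finset.filter_union, Finset.card_union_of_disjoint (Finset.disjoint_filter_filter h)]

theorem degIn_mono {V : Type} (r : V → V → Prop) {X Y : Finset V} (h : X ⊆ Y) (v : V) :
    degIn r X v ≤ degIn r Y v :=
  Finset.card_le_card (Finset.filter_subset_filter _ h)

theorem card_le_degIn {V : Type} {r : V → V → Prop} {U S : Finset V} {v : V} (hS : S ⊆ U)
    (h : ∀ b ∈ S, r v b) : S.card ≤ degIn r U v :=
  Finset.card_le_card fun b hb => Finset.mem_filter.2 ⟨hS hb, h b hb⟩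

theorem degIn_erase_self {V : Type} (r : V → V → Prop) (hi : ∀ a, ¬ r a a) (U : Finset V) (v : V) :
    degIn r (U.erase v) v = degIn r U v := by
  unfold degIn
  congr 1
  ext a
  simp only [Finset.mem_filter, Finset.mem_erase]
  refine ⟨fun h => ⟨h.1.2, h.2⟩, fun h => ⟨⟨?_, h.1⟩, h.2⟩⟩
  rintro rfl
  exact hi _ h.2

theorem degIn_singleton {V : Type} (r : V → V → Prop) (hi : ∀ a, ¬ r a a) (v : V) :
    degIn r {v} v = 0 := by
  unfold degIn
  rw [Finset.card_eq_zero, Finset.filter_eq_empty_iff]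
  intro a ha
  rw [Finset.mem_singleton.1 ha]
  exact hi v

theorem sum_degIn_erase {V : Type} (r : V → V → Prop) (hr : ∀ a b, r a b → r b a)
    (hi : ∀ a, ¬ r a a) (U : Finset V) {v : V} (hv : v ∈ U) :
    ∑ a ∈ U, degIn r U a = ∑ a ∈ U.erase v, degIn r (U.erase v) a + 2 * degIn r U v := by
  have hU : U.erase v ∪ {v} = U := by
    rw [Finset.union_comm, ← Finset.insert_eq, Finset.insert_erase hv]
  have hd : Disjoint (U.erase v) {v} := by simp
  have h1 : ∀ a, degIn r U a = degIn r (U.erase v) a + degIn r {v} a := fun a => by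
    rw [← degIn_union r hd, hU]
  have h2 := sum_degIn_comm r hr (U.erase v) {v}
  rw [Finset.sum_singleton, degIn_erase_self r hi] at h2
  rw [← Finset.sum_erase_add _ _ hv, Finset.sum_congr rfl (fun a _ => h1 a),
    Finset.sum_add_distrib, h2]
  ring

/-! ### Minimum degree and maximum cuts -/

/-- A set in which the average degree is at least `2q` contains a nonempty subset of minimum
degree at least `q`: repeatedly deleting a vertex of degree below `q` does not lower the
average degree, so the deletion cannot exhaust the set. -/
theorem exists_minDeg {V : Type} (r : V → V → Prop) (hr : ∀ a b, r a b → r b a)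
    (hi : ∀ a, ¬ r a a) (q : ℝ) (U : Finset V) (hU : U.Nonempty)
    (h : 2 * q * U.card ≤ ((∑ a ∈ U, degIn r U a : ℕ) : ℝ)) :
    ∃ U' ⊆ U, U'.Nonempty ∧ ∀ v ∈ U', q ≤ degIn r U' v := by
  induction U using Finset.strongInduction with
  | H U ih =>
    by_cases hq : ∀ v ∈ U, q ≤ degIn r U v
    · exact ⟨U, Finset.Subset.refl _, hU, hq⟩
    push Not at hq
    obtain ⟨v, hv, hlt⟩ := hq
    have hs := sum_degIn_erase r hr hi U hv
    have hc := Finset.card_erase_add_one hv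
    have hc' : ((U.erase v).card : ℝ) + 1 = U.card := by exact_mod_cast hc
    rw [hs] at h
    push_cast at h
    rw [← hc'] at h
    have hne : (U.erase v).Nonempty := by
      rw [Finset.nonempty_iff_ne_empty]
      intro he
      rw [he] at h
      simp at h
      linarith
    obtain ⟨U', h1, h2, h3⟩ := ih _ (Finset.erase_ssubset hv) hne (by push_cast; linarith)
    exact ⟨U', h1.trans (Finset.erase_subset _ _), h2, h3⟩

/-- Every vertex of a maximum cut has at least half of its neighbours on the other side; the
larger side of such a cut is `A`. -/
theorem exists_cut_s3 {V : Type} (r : V → V → Prop) (hr : ∀ a b, r a b → r b a)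
    (hi : ∀ a, ¬ r a a) (U : Finset V) (hU : U.Nonempty) :
    ∃ A B : Finset V, A.Nonempty ∧ Disjoint A B ∧ B.card ≤ A.card ∧ A ⊆ U ∧
      ∀ v ∈ A, degIn r U v ≤ 2 * degIn r B v := by
  let cut : Finset V → ℕ := fun S => ∑ a ∈ S, degIn r (U \ S) a
  obtain ⟨S, hSU, hmax⟩ := Finset.exists_max_image U.powerset cut ⟨U, by simp⟩
  rw [Finset.mem_powerset] at hSU
  have hcomp : cut (U \ S) = cut S := by
    simp only [cut]
    rw [Finset.sdiff_sdiff_eq_self hSU, sum_degIn_comm r hr]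
  have key : ∀ A ⊆ U, (∀ X ∈ U.powerset, cut X ≤ cut A) →
      ∀ v ∈ A, degIn r U v ≤ 2 * degIn r (U \ A) v := by
    intro A hA hm v hv
    have h := hm (A.erase v) (Finset.mem_powerset.2 ((Finset.erase_subset _ _).trans hA))
    have hB : U \ A.erase v = (U \ A) ∪ {v} := by
      ext x
      simp only [Finset.mem_sdiff, Finset.mem_erase, Finset.mem_union, Finset.mem_singleton]
      by_cases hx : x = v
      · subst hx
        simp [hA hv]
      · simp [hx]
    have hd : Disjoint (U \ A) {v} := by simp [hv]
    have e1 : cut (A.erase v) = ∑ a ∈ A.erase v, degIn r (U \ A) a + degIn r A v := by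
      simp only [cut]
      rw [hB, Finset.sum_congr rfl (fun a _ => degIn_union r hd a), Finset.sum_add_distrib,
        sum_degIn_comm r hr (A.erase v) {v}, Finset.sum_singleton, degIn_erase_self r hi]
    have e2 : cut A = ∑ a ∈ A.erase v, degIn r (U \ A) a + degIn r (U \ A) v :=
      (Finset.sum_erase_add _ _ hv).symm
    have e3 : degIn r U v = degIn r A v + degIn r (U \ A) v := by
      rw [← degIn_union r Finset.disjoint_sdiff, Finset.union_sdiff_of_subset hA]
    omega
  have hcard := Finset.card_sdiff_add_card_eq_card hSU
  have hpos := hU.card_pos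
  rcases le_total (U \ S).card S.card with hle | hle
  · exact ⟨S, U \ S, Finset.card_pos.1 (by omega), Finset.disjoint_sdiff, hle, hSU,
      key S hSU hmax⟩
  · refine ⟨U \ S, S, Finset.card_pos.1 (by omega), Finset.sdiff_disjoint, hle,
      Finset.sdiff_subset, ?_⟩
    have := key (U \ S) Finset.sdiff_subset (fun X hX => by rw [hcomp]; exact hmax X hX)
    rwa [Finset.sdiff_sdiff_eq_self hSU] at this

/-! ### Nested matchings -/

/-- If `|B| ≤ |A|` and every vertex of `A` has a neighbour in `B`, then some nonempty `A' ⊆ A`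
is perfectly matched by `f` to its whole neighbourhood in `B`. Hall's condition holds for a
minimal nonempty `A'` whose neighbourhood is no larger than `A'`. -/
theorem exists_tight_matching {V : Type} (r : V → V → Prop) (A B : Finset V) (hA : A.Nonempty)
    (hBA : B.card ≤ A.card) (hdeg : ∀ a ∈ A, 1 ≤ degIn r B a) :
    ∃ (A' : Finset V) (f : V → V), A' ⊆ A ∧ A'.Nonempty ∧ Set.InjOn f A' ∧
      (∀ a ∈ A', f a ∈ B ∧ r a (f a)) ∧ ∀ a ∈ A', ∀ b ∈ B, r a b → b ∈ A'.image f := by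
  let N : Finset V → Finset V := fun S => S.biUnion fun a => B.filter (r a)
  let C := A.powerset.filter fun S => S.Nonempty ∧ (N S).card ≤ S.card
  have hAC : A ∈ C := by
    simp only [C, Finset.mem_filter, Finset.mem_powerset]
    refine ⟨Finset.Subset.refl _, hA, (Finset.card_le_card ?_).trans hBA⟩
    exact Finset.biUnion_subset.2 fun a _ => Finset.filter_subset _ _
  obtain ⟨A', hA'C, hmin⟩ := Finset.exists_min_image C Finset.card ⟨A, hAC⟩
  simp only [C, Finset.mem_filter, Finset.mem_powerset] at hA'C hmin
  obtain ⟨hA'A, hA'ne, hA'N⟩ := hA'C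
  have hall : ∀ S ⊆ A', S.card ≤ (N S).card := by
    intro S hS
    rcases S.eq_empty_or_nonempty with rfl | ⟨x, hx⟩
    · simp
    by_contra hlt
    push Not at hlt
    have hxN : 1 ≤ (N S).card := (hdeg x (hA'A (hS hx))).trans
      (Finset.card_le_card (Finset.subset_biUnion_of_mem (fun a => B.filter (r a)) hx))
    -- Erasing `x` leaves a smaller nonempty set with small neighbourhood.
    have hc := Finset.card_erase_add_one hx
    have hle := Finset.card_le_card hS
    have hN : (N (S.erase x)).card ≤ (N S).card :=
      Finset.card_le_card (Finset.biUnion_subset_biUnion_of_subset_left _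
        (Finset.erase_subset _ _))
    have := hmin (S.erase x) ⟨((Finset.erase_subset _ _).trans hS).trans hA'A,
      Finset.card_pos.1 (by omega), by omega⟩
    omega
  obtain ⟨g, hginj, hg⟩ := (Finset.all_card_le_biUnion_card_iff_exists_injective
    (fun a : A' => B.filter (r a))).1 (by
      intro S
      have h := hall (S.map (Function.Embedding.subtype _)) (by
        intro x hx
        obtain ⟨y, -, rfl⟩ := Finset.mem_map.1 hx
        exact y.2)
      rw [Finset.card_map] at h
      refine h.trans (Finset.card_le_card ?_)
      intro b hb
      simp only [N, Finset.mem_biUnion, Finset.mem_map] at hb ⊢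
      obtain ⟨_, ⟨y, hy, rfl⟩, hb⟩ := hb
      exact ⟨y, hy, hb⟩)
  let f : V → V := fun a => if h : a ∈ A' then g ⟨a, h⟩ else a
  have hf : ∀ a (h : a ∈ A'), f a = g ⟨a, h⟩ := fun a h => dif_pos h
  have hfB : ∀ a ∈ A', f a ∈ B ∧ r a (f a) := fun a ha => by
    rw [hf a ha]
    simpa using hg ⟨a, ha⟩
  have hinj : Set.InjOn f A' := by
    intro a ha b hb hab
    rw [hf a ha, hf b hb] at hab
    exact congrArg Subtype.val (hginj hab)
  refine ⟨A', f, hA'A, hA'ne, hinj, hfB, ?_⟩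
  have himg : A'.image f = N A' := by
    refine Finset.eq_of_subset_of_card_le ?_ ?_
    · intro b hb
      obtain ⟨a, ha, rfl⟩ := Finset.mem_image.1 hb
      exact Finset.mem_biUnion.2 ⟨a, ha, Finset.mem_filter.2 (hfB a ha)⟩
    · rwa [Finset.card_image_of_injOn hinj]
  intro a ha b hb hab
  rw [himg]
  exact Finset.mem_biUnion.2 ⟨a, ha, Finset.mem_filter.2 ⟨hb, hab⟩⟩

/-- If `|B| ≤ |A|` and every vertex of `A` has at least `t` neighbours in `B`, there are `t`
pairwise edge-disjoint matchings `f i : A i → B` whose vertex sets are nested. The matched set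
contains the whole neighbourhood of `A 0`, so deleting the first matching costs each vertex of
`A 0` exactly one neighbour and the construction can be repeated inside the matched sets. -/
theorem exists_nested_matchings {V : Type} (t : ℕ) : ∀ (r : V → V → Prop) (A B : Finset V),
    A.Nonempty → B.card ≤ A.card → (∀ a ∈ A, t ≤ degIn r B a) →
    ∃ (X : ℕ → Finset V) (f : ℕ → V → V),
      (∀ i < t, X i ⊆ A ∧ (X i).Nonempty ∧ Set.InjOn (f i) (X i) ∧
        ∀ a ∈ X i, f i a ∈ B ∧ r a (f i a)) ∧
      ∀ i j, i < j → j < t → X j ⊆ X i ∧ (X j).image (f j) ⊆ (X i).image (f i) ∧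
        ∀ a ∈ X j, f i a ≠ f j a := by
  induction t with
  | zero =>
    intro r A B _ _ _
    exact ⟨fun _ => ∅, fun _ => id, by simp, by simp⟩
  | succ t ih =>
    intro r A B hA hBA hdeg
    obtain ⟨A', g, hA'A, hA'ne, hginj, hgB, hgN⟩ := exists_tight_matching r A B hA hBA
      (fun a ha => le_trans (by omega) (hdeg a ha))
    have hdeg' : ∀ a ∈ A', t ≤ degIn (fun a b => r a b ∧ b ≠ g a) (A'.image g) a := by
      intro a ha
      have h1 := hdeg a (hA'A ha)
      have h2 : ∀ b ∈ (B.filter (r a)).erase (g a), b ∈ A'.image g ∧ r a b ∧ b ≠ g a := by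
        intro b hb
        rw [Finset.mem_erase, Finset.mem_filter] at hb
        exact ⟨hgN a ha b hb.2.1 hb.2.2, hb.2.2, hb.1⟩
      have h3 : _ ≤ degIn (fun a b => r a b ∧ b ≠ g a) (A'.image g) a :=
        card_le_degIn (fun b hb => (h2 b hb).1) (fun b hb => (h2 b hb).2)
      have h4 := Finset.card_erase_add_one (Finset.mem_filter.2 (hgB a ha))
      unfold degIn at h1
      omega
    obtain ⟨X, f, h1, h2⟩ := ih (fun a b => r a b ∧ b ≠ g a) A' (A'.image g) hA'ne
      Finset.card_image_le hdeg'
    have hgB' : A'.image g ⊆ B := by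
      intro b hb
      obtain ⟨a, ha, rfl⟩ := Finset.mem_image.1 hb
      exact (hgB a ha).1
    refine ⟨fun i => Nat.casesOn i A' X, fun i => Nat.casesOn i g f, ?_, ?_⟩
    · rintro (_ | i) hi
      · exact ⟨hA'A, hA'ne, hginj, hgB⟩
      · obtain ⟨a1, a2, a3, a4⟩ := h1 i (by omega)
        exact ⟨a1.trans hA'A, a2, a3, fun a ha => ⟨hgB' (a4 a ha).1, (a4 a ha).2.1⟩⟩
    · rintro (_ | i) (_ | j) hij hj
      · omega
      · obtain ⟨a1, a2, a3, a4⟩ := h1 j (by omega)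
        exact ⟨a1, Finset.image_subset_iff.2 fun a ha => (a4 a ha).1,
          fun a ha => (a4 a ha).2.2.symm⟩
      · omega
      · exact h2 i j (by omega) (by omega)

/-! ### The union of matchings of comparable size -/

/-- If `A`, `B` are disjoint, `|B| ≤ |A|` and every vertex of `A` has at least `t` neighbours in
`B`, then among `t` nested matchings at least `k ≥ t / (⌊log₂ n⌋ + 1)` have sizes within a factor two
of each other. Their union `H` has maximum degree at most `k` and average degree at least `k / 2`,
hence a nonempty subset `U` on which the minimum degree is at least `k / 4`. -/
theorem exists_subset_deg_bounds {V : Type} [Fintype V] (r : V → V → Prop)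
    (hr : ∀ a b, r a b → r b a) (A B : Finset V) (hA : A.Nonempty) (hAB : Disjoint A B)
    (hBA : B.card ≤ A.card) (t : ℕ) (ht : 0 < t) (hdeg : ∀ a ∈ A, t ≤ degIn r B a) :
    ∃ (H : SimpleGraph V) (U : Finset V) (k : ℕ), (∀ a b, H.Adj a b → r a b) ∧ U.Nonempty ∧
      (t : ℝ) / (Nat.log 2 (Fintype.card V) + 1 : ℕ) ≤ k ∧
      ∀ v ∈ U, degIn H.Adj U v ≤ k ∧ (k : ℝ) / 4 ≤ degIn H.Adj U v := by
  obtain ⟨X, f, hX, hnest⟩ := exists_nested_matchings t r A B hA hBA hdeg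
  set L := Nat.log 2 (Fintype.card V) + 1 with hL
  have hLpos : (0 : ℝ) < L := by rw [hL]; positivity
  obtain ⟨j, -, hj⟩ := Finset.exists_le_card_fiber_of_nsmul_le_card_of_maps_to
    (s := Finset.range t) (t := Finset.range L) (f := fun i => Nat.log 2 (X i).card)
    (b := (t : ℝ) / L) (by
      intro i _
      rw [Finset.mem_range, hL, Nat.lt_succ_iff]
      exact Nat.log_mono_right (Finset.card_le_univ _))
    ⟨0, by simp [hL]⟩
    (by
      rw [Finset.card_range, Finset.card_range, nsmul_eq_mul, mul_div_cancel₀ _ hLpos.ne'])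
  set I := (Finset.range t).filter (fun i => Nat.log 2 (X i).card = j) with hI
  have hIt : ∀ i ∈ I, i < t := fun i hi => Finset.mem_range.1 (Finset.mem_filter.1 hi).1
  have hIlow : ∀ i ∈ I, 2 ^ j ≤ (X i).card := fun i hi => by
    rw [← (Finset.mem_filter.1 hi).2]
    exact Nat.pow_log_le_self 2 (hX i (hIt i hi)).2.1.card_pos.ne'
  have hIup : ∀ i ∈ I, (X i).card < 2 ^ (j + 1) := fun i hi => by
    rw [← (Finset.mem_filter.1 hi).2]
    exact Nat.lt_pow_succ_log_self (by norm_num) _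
  have hIne : I.Nonempty := by
    rw [← Finset.card_pos]
    have : (0 : ℝ) < t / L := div_pos (by exact_mod_cast ht) hLpos
    exact_mod_cast this.trans_le hj
  let P : ℕ → V → V → Prop := fun i v w => (v ∈ X i ∧ f i v = w) ∨ (w ∈ X i ∧ f i w = v)
  have hXA : ∀ i ∈ I, ∀ a ∈ X i, a ∈ A := fun i hi a ha => (hX i (hIt i hi)).1 ha
  have hfB : ∀ i ∈ I, ∀ a ∈ X i, f i a ∈ B := fun i hi a ha =>
    ((hX i (hIt i hi)).2.2.2 a ha).1
  have hne : ∀ a ∈ A, ∀ b ∈ B, a ≠ b := fun a ha b hb hab =>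
    Finset.disjoint_left.1 hAB ha (hab ▸ hb)
  obtain ⟨H, hH⟩ : ∃ H : SimpleGraph V, ∀ v w, H.Adj v w ↔ ∃ i ∈ I, P i v w := by
    refine ⟨⟨fun v w => ∃ i ∈ I, P i v w, ⟨?_⟩, ⟨?_⟩⟩, fun _ _ => Iff.rfl⟩
    · rintro v w ⟨i, hi, h⟩
      exact ⟨i, hi, h.symm⟩
    · rintro v ⟨i, hi, h⟩
      have h : v ∈ X i ∧ f i v = v := h.elim id id
      exact hne v (hXA i hi v h.1) (f i v) (hfB i hi v h.1) h.2.symm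
  -- The nested matchings of one dyadic class all live on the vertex set of the first of them.
  set m := I.min' hIne with hm
  have hmI : m ∈ I := Finset.min'_mem _ _
  set Y := (X m).image (f m) with hY
  have hnest' : ∀ i ∈ I, X i ⊆ X m ∧ (X i).image (f i) ⊆ Y := fun i hi => by
    rcases (Finset.min'_le I i hi).eq_or_lt with h | h
    · rw [hY, hm, h]
      exact ⟨Finset.Subset.refl _, Finset.Subset.refl _⟩
    · exact ⟨(hnest m i h (hIt i hi)).1, (hnest m i h (hIt i hi)).2.1⟩
  have hXY : Disjoint (X m) Y := by
    refine hAB.mono (hX m (hIt m hmI)).1 ?_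
    exact Finset.image_subset_iff.2 fun a ha => hfB m hmI a ha
  have hup : ∀ (U : Finset V) (v : V), degIn H.Adj U v ≤ I.card := by
    intro U v
    refine Finset.card_le_card_of_forall_subsingleton (fun w i => P i v w) ?_ ?_
    · intro w hw
      exact (hH v w).1 (Finset.mem_filter.1 hw).2
    · intro i hi w hw w' hw'
      rcases hw.2 with ⟨h1, h2⟩ | ⟨h1, h2⟩ <;> rcases hw'.2 with ⟨h3, h4⟩ | ⟨h3, h4⟩
      · exact h2.symm.trans h4
      · exact absurd h4.symm (hne v (hXA i hi v h1) _ (hfB i hi _ h3))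
      · exact absurd h2.symm (hne v (hXA i hi v h3) _ (hfB i hi _ h1))
      · exact (hX i (hIt i hi)).2.2.1 h1 h3 (h2.trans h4.symm)
  have hedges : I.card * 2 ^ j ≤ ∑ a ∈ X m, degIn H.Adj Y a := by
    have h1 : ∀ a ∈ X m, (I.filter (fun i => a ∈ X i)).card ≤ degIn H.Adj Y a := by
      intro a _
      refine Finset.card_le_card_of_injOn (fun i => f i a) ?_ ?_
      · intro i hi
        obtain ⟨hi, hai⟩ := Finset.mem_filter.1 hi
        exact Finset.mem_filter.2 ⟨(hnest' i hi).2 (Finset.mem_image_of_mem _ hai),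
          (hH _ _).2 ⟨i, hi, Or.inl ⟨hai, rfl⟩⟩⟩
      · intro i hi i' hi' hii
        obtain ⟨hi, hai⟩ := Finset.mem_filter.1 hi
        obtain ⟨hi', hai'⟩ := Finset.mem_filter.1 hi'
        rcases lt_trichotomy i i' with h | h | h
        · exact absurd hii ((hnest i i' h (hIt i' hi')).2.2 a hai')
        · exact h
        · exact absurd hii.symm ((hnest i' i h (hIt i hi)).2.2 a hai)
    have h2 := Finset.sum_card_bipartiteAbove_eq_sum_card_bipartiteBelow
      (s := X m) (t := I) (fun a i => a ∈ X i)
    have h3 : ∀ i ∈ I, ((X m).filter (fun a => a ∈ X i)).card = (X i).card := fun i hi => by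
      rw [Finset.filter_mem_eq_inter, Finset.inter_eq_right.2 (hnest' i hi).1]
    calc I.card * 2 ^ j = ∑ _i ∈ I, 2 ^ j := by simp
      _ ≤ ∑ i ∈ I, (X i).card := Finset.sum_le_sum hIlow
      _ = ∑ i ∈ I, ((X m).filter (fun a => a ∈ X i)).card :=
        Finset.sum_congr rfl fun i hi => (h3 i hi).symm
      _ = ∑ a ∈ X m, (I.filter (fun i => a ∈ X i)).card := h2.symm
      _ ≤ _ := Finset.sum_le_sum h1
  have hsum : 2 * (I.card * 2 ^ j) ≤ ∑ v ∈ X m ∪ Y, degIn H.Adj (X m ∪ Y) v := by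
    rw [Finset.sum_union hXY, two_mul]
    refine add_le_add (hedges.trans (Finset.sum_le_sum fun v _ =>
      degIn_mono _ Finset.subset_union_right v)) ?_
    rw [sum_degIn_comm H.Adj (fun _ _ h => h.symm)] at hedges
    exact hedges.trans (Finset.sum_le_sum fun v _ => degIn_mono _ Finset.subset_union_left v)
  have hcard : (X m ∪ Y).card ≤ 4 * 2 ^ j := by
    have h1 := Finset.card_union_le (X m) Y
    have h2 : Y.card ≤ (X m).card := Finset.card_image_le
    have h3 := hIup m hmI
    rw [pow_succ] at h3
    omega
  obtain ⟨U, -, hUne, hUdeg⟩ := exists_minDeg H.Adj (fun _ _ h => h.symm) (fun a => H.irrefl)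
    ((I.card : ℝ) / 4) (X m ∪ Y) ((hX m (hIt m hmI)).2.1.mono Finset.subset_union_left) (by
      have h1 : ((X m ∪ Y).card : ℝ) ≤ 4 * 2 ^ j := by exact_mod_cast hcard
      have h2 : (2 : ℝ) * (I.card * 2 ^ j) ≤
          ((∑ v ∈ X m ∪ Y, degIn H.Adj (X m ∪ Y) v : ℕ) : ℝ) := by exact_mod_cast hsum
      refine le_trans ?_ h2
      have h3 : (0 : ℝ) ≤ 2 * ((I.card : ℝ) / 4) := by positivity
      calc _ ≤ 2 * ((I.card : ℝ) / 4) * (4 * 2 ^ j) := mul_le_mul_of_nonneg_left h1 h3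
        _ = _ := by ring)
  refine ⟨H, U, I.card, ?_, hUne, hj, fun v hv => ⟨hup U v, hUdeg v hv⟩⟩
  intro a b hab
  obtain ⟨i, hi, ⟨h1, rfl⟩ | ⟨h1, rfl⟩⟩ := (hH a b).1 hab
  · exact ((hX i (hIt i hi)).2.2.2 a h1).2
  · exact hr _ _ ((hX i (hIt i hi)).2.2.2 b h1).2

/-! ### The almost-regular subgraph -/

theorem degree_eq_degIn {V : Type} (H : SimpleGraph V) (U : Finset V) (G' : SimpleGraph U)
    (hG' : ∀ a b : U, G'.Adj a b ↔ H.Adj a b) (v : U) : G'.degree v = degIn H.Adj U v := by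
  unfold degIn
  rw [← SimpleGraph.card_neighborFinset_eq_degree,
    ← Finset.card_map (Function.Embedding.subtype _)]
  congr 1
  ext a
  simp only [Finset.mem_map, SimpleGraph.mem_neighborFinset, hG',
    Finset.mem_filter, Function.Embedding.subtype_apply]
  constructor
  · rintro ⟨b, hb, rfl⟩
    exact ⟨b.2, hb⟩
  · rintro ⟨ha, h⟩
    exact ⟨⟨a, ha⟩, h, rfl⟩

/-- `⌊log₂ n⌋ + 1 ≤ 2 log₂ n`, and `2 / log 2 ≤ 25 / 4`. -/
theorem natLog_bound {n : ℕ} (hn : 2 ≤ n) :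
    ((Nat.log 2 n + 1 : ℕ) : ℝ) ≤ 25 / 4 * Real.log n := by
  have h1 : (Nat.log 2 n : ℝ) * Real.log 2 ≤ Real.log n := by
    rw [← Real.log_pow]
    refine Real.log_le_log (by positivity) ?_
    exact_mod_cast Nat.pow_log_le_self 2 (by omega)
  have h2 : (1 : ℝ) ≤ Nat.log 2 n := by
    exact_mod_cast Nat.log_pos (by norm_num) hn
  have h3 := Real.log_two_gt_d9
  push_cast
  nlinarith

/-- Every graph `G` on `n ≥ 2` vertices contains a nonempty
`6`-almost-regular subgraph `G'` whose average degree is at least `d(G)/(100 log n)`. -/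
theorem stmt_3 {V : Type} [Fintype V] (G : SimpleGraph V) (hn : 2 ≤ Fintype.card V) :
    ∃ (s : Finset V) (G' : SimpleGraph ↥s), s.Nonempty ∧
      (∀ a b : ↥s, G'.Adj a b → G.Adj (a : V) (b : V)) ∧
      AlmostRegular 6 G' ∧
      avgDeg G / (100 * Real.log (Fintype.card V)) ≤ avgDeg G' := by
  have hVne : (Finset.univ : Finset V).Nonempty := Finset.card_pos.1 (by
    rw [Finset.card_univ]; omega)
  have hnpos : (0 : ℝ) < Fintype.card V := by exact_mod_cast (by omega : 0 < Fintype.card V)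
  have hd0 : 0 ≤ avgDeg G := by unfold avgDeg; positivity
  rcases hd0.eq_or_lt with hd | hd
  · obtain ⟨G', hG'⟩ : ∃ G' : SimpleGraph (Finset.univ : Finset V), ∀ a b, ¬ G'.Adj a b :=
      ⟨⊥, fun _ _ h => h⟩
    refine ⟨Finset.univ, G', hVne, fun a b h => absurd h (hG' a b), ?_, ?_⟩
    · have h : G'.maxDegree ≤ 0 := SimpleGraph.maxDegree_le_of_forall_degree_le _ _ fun v => by
        rw [← SimpleGraph.card_neighborFinset_eq_degree, Nat.le_zero, Finset.card_eq_zero,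
          Finset.eq_empty_iff_forall_notMem]
        exact fun w hw => hG' v w ((G'.mem_neighborFinset v w).1 hw)
      unfold AlmostRegular
      rw [Nat.le_zero.1 h]
      push_cast
      positivity
    · rw [← hd, zero_div]
      unfold avgDeg
      positivity
  have hlog : 0 < Real.log (Fintype.card V) :=
    Real.log_pos (by exact_mod_cast (by omega : 1 < Fintype.card V))
  obtain ⟨U, -, hUne, hU⟩ := exists_minDeg G.Adj (fun _ _ h => h.symm) (fun _ => G.irrefl)
    (avgDeg G / 2) Finset.univ hVne (by
      have h : ∀ v, degIn G.Adj Finset.univ v = G.degree v := fun v => by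
        unfold degIn
        rw [← SimpleGraph.card_neighborFinset_eq_degree, SimpleGraph.neighborFinset_eq_filter]
      rw [Finset.sum_congr rfl (fun v _ => h v)]
      unfold avgDeg
      rw [Finset.card_univ]
      push_cast
      field_simp
      exact le_rfl)
  obtain ⟨A, B, hA, hAB, hBA, hAU, hcut⟩ := exists_cut_s3 G.Adj (fun _ _ h => h.symm)
    (fun _ => G.irrefl) U hUne
  obtain ⟨H, W, k, hHG, hWne, hk, hW⟩ := exists_subset_deg_bounds G.Adj (fun _ _ h => h.symm)
    A B hA hAB hBA ⌈avgDeg G / 4⌉₊ (Nat.ceil_pos.2 (by positivity)) (by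
      intro a ha
      rw [Nat.ceil_le]
      have h1 := hU a (hAU ha)
      have h2 : (degIn G.Adj U a : ℝ) ≤ 2 * degIn G.Adj B a := by exact_mod_cast hcut a ha
      linarith)
  have hkd : avgDeg G / (100 * Real.log (Fintype.card V)) ≤ (k : ℝ) / 4 := by
    have hb := natLog_bound hn
    have hLpos : (0 : ℝ) < (Nat.log 2 (Fintype.card V) + 1 : ℕ) := by positivity
    rw [div_le_iff₀ hLpos] at hk
    have h1 := Nat.le_ceil (avgDeg G / 4)
    have h2 := mul_le_mul_of_nonneg_left hb (Nat.cast_nonneg (α := ℝ) k)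
    rw [div_le_iff₀ (by positivity)]
    linarith
  have : Nonempty W := hWne.to_subtype
  obtain ⟨G', hG'⟩ : ∃ G' : SimpleGraph W, ∀ a b, G'.Adj a b ↔ H.Adj a b :=
    ⟨H.comap Subtype.val, fun _ _ => Iff.rfl⟩
  refine ⟨W, G', hWne, fun a b h => hHG a b ((hG' a b).1 h), ?_, ?_⟩
  · unfold AlmostRegular
    have h1 : G'.maxDegree ≤ k :=
      SimpleGraph.maxDegree_le_of_forall_degree_le _ _ fun v => by
        rw [degree_eq_degIn H W G' hG']
        exact (hW v v.2).1
    obtain ⟨v, hv⟩ := G'.exists_minimal_degree_vertex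
    rw [hv, degree_eq_degIn H W G' hG']
    have h2 := (hW v v.2).2
    have h3 : (G'.maxDegree : ℝ) ≤ k := by exact_mod_cast h1
    linarith
  · refine hkd.trans ?_
    unfold avgDeg
    have hWpos : (0 : ℝ) < Fintype.card W := by exact_mod_cast Fintype.card_pos
    rw [le_div_iff₀ hWpos, mul_comm, ← nsmul_eq_mul, ← Finset.card_univ]
    refine Finset.card_nsmul_le_sum _ _ _ fun v _ => ?_
    rw [degree_eq_degIn H W G' hG']
    exact (hW v v.2).2
end

section
/- Let λ > 0, K ≥ 1, and let G be a connected bipartite graph on n vertices with bipartition {X, Y}, m edges and no isolated vertices, which is a K-almost-regular λ-expander. Let M = DA be the random-walk transition matrix of G. Then for every pair of vertices v, u and every integer k ≥ 1, |(M^k)_{v,u} − (d(u)/(2m))·(1 + (−1)^{k + 1_{v∈X} + 1_{u∈X}})| ≤ √K · (1 − (1/8)·(λ/K)^2)^k. -/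
/-!
Weight each vertex by its degree. The walk operator `M` is then self-adjoint, with `M 1 = 1` and
`M χ = -χ`, where `χ` is the sign function of the bipartition. The limiting term
`d(u)/(2m) * (1 + (-1)^k χ(v) χ(u))` is exactly the part of `M^k 1_u` lying in the span of `1`
and `χ`, so the difference to be bounded is `M^k g`, where `g` is the component of the indicator
`1_u` orthogonal to both. If `M` contracts that orthogonal complement by the factor
`1 - (lam/K)^2/8`, then the weighted norm of `M^k g` is at most `(1 - (lam/K)^2/8)^k * √d(u)`, and
reading off the value at `v` costs a factor `1/√d(v)`, where `d(u)/d(v) ≤ K`.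

The contraction (`contraction`) comes from Cheeger's inequality (`cheeger`). By almost-regularity
the expansion hypothesis says that sets of at most half the vertices have conductance at least
`lam/K` (`conductance`). Splitting a function of mean zero at a median and applying the
co-area inequality (`coarea`) to the squares of the two parts bounds the quadratic form of `M`
from above. Multiplication by `χ` flips the sign of that form, which gives the lower bound, and
polarization converts the two bounds into an operator norm bound.
-/


open Finset
open scoped Classical

/-- The transition matrix `M = D·A` of the nearest-neighbour random walk on `G`:
`M v u = 1/d(v)` if `vu` is an edge and `0` otherwise. -/
noncomputable def transMat {V : Type} [Fintype V] (G : SimpleGraph V) : Matrix V V ℝ :=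
  fun v u => if G.Adj v u then (1 : ℝ) / (G.degree v : ℝ) else 0

/-- `{P, Pᶜ}` is a bipartition of `G`: every edge crosses between `P` and its complement. -/
def IsBipartition {V : Type} (G : SimpleGraph V) (P : Finset V) : Prop :=
  ∀ a b, G.Adj a b → (a ∈ P ↔ b ∉ P)

/-- A bipartite graph `G` with bipartition `{P, Pᶜ}` has mixing time `k` if for all vertices
`u, v`, `|(M^k)_{v,u} − (d(u)/(2m))·(1 + (−1)^{k + 1_{v∈P} + 1_{u∈P}})| ≤ 1/n²`. -/
noncomputable def HasMixingTime {V : Type} [Fintype V] (G : SimpleGraph V) (P : Finset V)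
    (k : ℕ) : Prop :=
  ∀ v u : V,
    |((transMat G ^ k) v u) - ((G.degree u : ℝ) / (2 * (G.edgeFinset.card : ℝ))) *
      (1 + (-1 : ℝ) ^ (k + (if v ∈ P then 1 else 0) + (if u ∈ P then 1 else 0)))| ≤
      1 / (Fintype.card V : ℝ) ^ 2

/-- The probability of a given trajectory `f` of `t` steps of the nearest-neighbour random
walk: the product of `1/d(v_i)` over `0 ≤ i ≤ t−1`. -/
noncomputable def walkProb {V : Type} [Fintype V] (G : SimpleGraph V) (t : ℕ)
    (f : Fin (t + 1) → V) : ℝ :=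
  ∏ i : Fin t, (1 : ℝ) / (G.degree (f i.castSucc) : ℝ)

/-- `f : Fin (t+1) → V` is a walk in `G`: consecutive vertices are adjacent. -/
def IsWalkFun {V : Type} (G : SimpleGraph V) (t : ℕ) (f : Fin (t + 1) → V) : Prop :=
  ∀ i : Fin t, G.Adj (f i.castSucc) (f i.succ)

/-- The probability that the nearest-neighbour random walk of length `t` started at `v`
satisfies the event `E`. -/
noncomputable def walkEventProb {V : Type} [Fintype V] (G : SimpleGraph V) (v : V) (t : ℕ)
    (E : (Fin (t + 1) → V) → Prop) : ℝ :=
  ∑ f : Fin (t + 1) → V, if f 0 = v ∧ IsWalkFun G t f ∧ E f then walkProb G t f else 0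

/-! ### A Cheeger inequality for weighted graphs -/

section Weighted

variable {V : Type} [Fintype V]

/-- Co-area inequality. The right-hand side is the integral over `t ≥ 0` of the weight of the
boundary of `{g > t}`; the integral is evaluated by peeling off the lowest level of `g` on its
support, so that only subsets of the support have to expand. -/
lemma coarea (w : V → V → ℝ) (h : ℝ) (n : ℕ) : ∀ (g : V → ℝ), (∀ x, 0 ≤ g x) →
    (univ.filter (fun x => 0 < g x)).card = n →
    (∀ X : Finset V, X ⊆ univ.filter (fun x => 0 < g x) →
      h * ∑ x ∈ X, ∑ y, w x y ≤ ∑ x ∈ X, ∑ y ∈ Xᶜ, w x y) →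
    h * ∑ x, (∑ y, w x y) * g x ≤ ∑ x, ∑ y, w x y * max (g x - g y) 0 := by
  induction n using Nat.strong_induction_on with
  | _ n ih =>
    intro g hg hn H
    set S := univ.filter (fun x => 0 < g x) with hS
    rcases S.eq_empty_or_nonempty with hE | hne
    · have h0 : ∀ x, g x = 0 := fun x => by
        have : x ∉ S := by simp [hE]
        simp only [hS, mem_filter, mem_univ, true_and, not_lt] at this
        exact le_antisymm this (hg x)
      simp [h0]
    · obtain ⟨z, hzS, hz⟩ := S.exists_min_image g hne
      have hzpos : 0 < g z := by simpa [hS] using hzS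
      have memS : ∀ x, x ∈ S ↔ 0 < g x := fun x => by simp [hS]
      have notS : ∀ x, x ∉ S → g x = 0 := fun x hx =>
        le_antisymm (not_lt.1 (fun h => hx ((memS x).2 h))) (hg x)
      -- `g'` is `g` lowered by its least positive value on the support.
      set g' : V → ℝ := fun x => g x - (if x ∈ S then g z else 0) with hg'
      have g'nn : ∀ x, 0 ≤ g' x := fun x => by
        by_cases hx : x ∈ S
        · simp [hg', hx, hz x hx]
        · simp [hg', hx, hg x]
      have hsub : univ.filter (fun x => 0 < g' x) ⊆ S.erase z := by
        intro x hx
        simp only [mem_filter, mem_univ, true_and] at hx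
        have hxS : x ∈ S := by
          by_contra hc
          simp [hg', hc, notS x hc] at hx
        refine mem_erase.2 ⟨?_, hxS⟩
        rintro rfl
        simp [hg', hxS] at hx
      have hcard : (univ.filter (fun x => 0 < g' x)).card < n := by
        rw [← hn]
        exact lt_of_le_of_lt (card_le_card hsub) (card_erase_lt_of_mem hzS)
      have key := ih _ hcard g' g'nn rfl
        (fun X hX => H X ((hX.trans hsub).trans (erase_subset _ _)))
      have HS := H S (Subset.refl _)
      have e1 : ∑ x, (∑ y, w x y) * g x
          = ∑ x, (∑ y, w x y) * g' x + g z * ∑ x ∈ S, ∑ y, w x y := by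
        rw [mul_sum, ← Finset.sum_filter_add_sum_filter_not univ (fun x => x ∈ S)
          (fun x => (∑ y, w x y) * g x), ← Finset.sum_filter_add_sum_filter_not univ
          (fun x => x ∈ S) (fun x => (∑ y, w x y) * g' x)]
        have a1 : ∑ x ∈ univ.filter (fun x => x ∈ S), (∑ y, w x y) * g x
            = ∑ x ∈ univ.filter (fun x => x ∈ S), (∑ y, w x y) * g' x
              + ∑ x ∈ S, g z * ∑ y, w x y := by
          have : univ.filter (fun x => x ∈ S) = S := by ext; simp
          rw [this, ← sum_add_distrib]
          refine sum_congr rfl fun x hx => ?_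
          simp only [hg', hx, if_true]; ring
        have a2 : ∑ x ∈ univ.filter (fun x => x ∉ S), (∑ y, w x y) * g x
            = ∑ x ∈ univ.filter (fun x => x ∉ S), (∑ y, w x y) * g' x := by
          refine sum_congr rfl fun x hx => ?_
          have hx : x ∉ S := by simpa using hx
          simp only [hg', hx, if_false, sub_zero]
        rw [a1, a2]; ring
      have e2 : ∑ x, ∑ y, w x y * max (g x - g y) 0
          = ∑ x, ∑ y, w x y * max (g' x - g' y) 0
            + g z * ∑ x ∈ S, ∑ y ∈ Sᶜ, w x y := by
        have a3 : ∑ x ∈ S, ∑ y ∈ Sᶜ, w x y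
            = ∑ x, ∑ y, if x ∈ S ∧ y ∉ S then w x y else 0 := by
          rw [← Finset.sum_filter_add_sum_filter_not univ (fun x => x ∈ S)
            (fun x => ∑ y, if x ∈ S ∧ y ∉ S then w x y else 0)]
          have h1 : univ.filter (fun x => x ∈ S) = S := by ext; simp
          have h2 : univ.filter (fun x => x ∉ S) = Sᶜ := by ext; simp
          rw [h1, Finset.sum_eq_zero (s := univ.filter (fun x => x ∉ S)), add_zero]
          · refine sum_congr rfl fun x hx => ?_
            simp only [hx, true_and]
            rw [← sum_filter, h2]
          · intro x hx
            have hx : x ∉ S := by simpa using hx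
            simp [hx]
        rw [a3, mul_sum, ← sum_add_distrib]
        refine sum_congr rfl fun x _ => ?_
        rw [mul_sum, ← sum_add_distrib]
        refine sum_congr rfl fun y _ => ?_
        by_cases hx : x ∈ S <;> by_cases hy : y ∈ S
        · simp [hg', hx, hy]
        · have := hz x hx
          have p1 : 0 ≤ g x - g z := by linarith
          simp only [hg', hx, hy, notS y hy, if_true, if_false, not_false_eq_true, and_self,
            sub_zero]
          rw [max_eq_left (hg x), max_eq_left p1]; ring
        · have := hz y hy
          have p1 : g z - g y ≤ 0 := by linarith
          have := hg y
          simp only [hg', hx, hy, notS x hx, if_true, if_false, not_true_eq_false, and_self,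
            sub_zero, zero_sub]
          rw [max_eq_right (by linarith), max_eq_right (by linarith)]; simp
        · simp [hg', hx, hy]
      rw [e1, e2, mul_add]
      have := mul_le_mul_of_nonneg_left HS hzpos.le
      nlinarith

lemma sum_sum_left (w : V → V → ℝ) (f : V → ℝ) :
    ∑ x, ∑ y, w x y * f x = ∑ x, (∑ y, w x y) * f x :=
  sum_congr rfl fun x _ => by rw [sum_mul]

lemma sum_sum_right (w : V → V → ℝ) (hs : ∀ x y, w x y = w y x) (f : V → ℝ) :
    ∑ x, ∑ y, w x y * f y = ∑ x, (∑ y, w x y) * f x := by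
  rw [sum_comm, ← sum_sum_left]
  exact sum_congr rfl fun x _ => sum_congr rfl fun y _ => by rw [hs]

/-- The Dirichlet form of a nonnegative function, all of whose superlevel sets expand, controls
its weighted `ℓ²` norm: the co-area inequality for `p ^ 2`, combined with AM-GM on each edge. -/
lemma dirichlet_of_nonneg (w : V → V → ℝ) (hw : ∀ x y, 0 ≤ w x y) (hs : ∀ x y, w x y = w y x)
    (h : ℝ) (hh : 0 ≤ h) (p : V → ℝ) (hp : ∀ x, 0 ≤ p x)
    (H : ∀ X : Finset V, X ⊆ univ.filter (fun x => 0 < p x) →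
      h * ∑ x ∈ X, ∑ y, w x y ≤ ∑ x ∈ X, ∑ y ∈ Xᶜ, w x y) :
    h ^ 2 / 4 * ∑ x, (∑ y, w x y) * p x ^ 2 ≤ ∑ x, ∑ y, w x y * (p x - p y) ^ 2 := by
  have hset : univ.filter (fun x => 0 < p x ^ 2) = univ.filter (fun x => 0 < p x) := by
    ext x
    simp only [mem_filter, mem_univ, true_and]
    exact ⟨fun h => lt_of_le_of_ne (hp x) (fun h0 => by simp [← h0] at h), fun h => by positivity⟩
  have c := coarea w h _ (fun x => p x ^ 2) (fun x => sq_nonneg _) rfl (by rwa [hset])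
  have b : h * ∑ x, ∑ y, w x y * max (p x ^ 2 - p y ^ 2) 0
      ≤ ∑ x, ∑ y, (2 * (w x y * (p x - p y) ^ 2)
        + h ^ 2 / 4 * (w x y * p x ^ 2 + w x y * p y ^ 2)) := by
    rw [mul_sum]
    refine sum_le_sum fun x _ => ?_
    rw [mul_sum]
    refine sum_le_sum fun y _ => ?_
    have e : h * max (p x ^ 2 - p y ^ 2) 0
        ≤ 2 * (p x - p y) ^ 2 + h ^ 2 / 4 * (p x ^ 2 + p y ^ 2) := by
      rcases le_total 0 (p x ^ 2 - p y ^ 2) with h0 | h0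
      · rw [max_eq_left h0]
        nlinarith [sq_nonneg (4 * (p x - p y) - h * (p x + p y)), sq_nonneg (h * (p x - p y))]
      · rw [max_eq_right h0]
        have := sq_nonneg (p x); have := sq_nonneg (p y)
        simp only [mul_zero]; positivity
    have := mul_le_mul_of_nonneg_left e (hw x y)
    nlinarith
  simp only [sum_add_distrib, ← mul_sum, sum_sum_left w (fun x => p x ^ 2),
    sum_sum_right w hs (fun x => p x ^ 2)] at b
  have := mul_le_mul_of_nonneg_left c hh
  nlinarith

lemma exists_median [Nonempty V] (f : V → ℝ) : ∃ c : ℝ,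
    2 * (univ.filter (fun x => c < f x)).card ≤ Fintype.card V ∧
    2 * (univ.filter (fun x => f x < c)).card ≤ Fintype.card V := by
  obtain ⟨z, -, hz⟩ := exists_max_image (univ : Finset V) f univ_nonempty
  have hne : (univ.filter (fun v => 2 * (univ.filter (fun x => f v < f x)).card
      ≤ Fintype.card V)).Nonempty := by
    refine ⟨z, ?_⟩
    have : univ.filter (fun x => f z < f x) = ∅ := by
      ext x; simpa using hz x (mem_univ _)
    simp [this]
  obtain ⟨v, hv, hmin⟩ := exists_min_image _ f hne
  simp only [mem_filter, mem_univ, true_and] at hv hmin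
  refine ⟨f v, hv, ?_⟩
  rcases (univ.filter (fun x => f x < f v)).eq_empty_or_nonempty with hE | hN
  · simp [hE]
  · -- Minimality of `v` applies to the next lower value `f u`, and `{f > f u} = {f ≥ f v}`.
    obtain ⟨u, hu, hmax⟩ := exists_max_image _ f hN
    simp only [mem_filter, mem_univ, true_and] at hu hmax
    have h1 : Fintype.card V < 2 * (univ.filter (fun x => f u < f x)).card := by
      by_contra hc
      exact absurd (hmin u (not_lt.1 hc)) (not_le.2 hu)
    have h2 : univ.filter (fun x => f u < f x) = univ.filter (fun x => ¬ f x < f v) := by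
      ext x
      simp only [mem_filter, mem_univ, true_and]
      exact ⟨fun a b => absurd (hmax x b) (not_le.2 a),
        fun a => lt_of_lt_of_le hu (not_lt.1 a)⟩
    have h3 := card_filter_add_card_filter_not (s := (univ : Finset V)) (fun x => f x < f v)
    rw [h2] at h1
    rw [card_univ] at h3
    omega

/-- Cheeger's inequality, in the form of a Poincaré inequality for functions of weighted mean
zero. Expansion is assumed for sets of at most half the vertices, so `f` is split at its median
with respect to counting measure. -/
lemma cheeger [Nonempty V] (w : V → V → ℝ) (hw : ∀ x y, 0 ≤ w x y)
    (hs : ∀ x y, w x y = w y x) (h : ℝ) (hh : 0 ≤ h)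
    (H : ∀ X : Finset V, 2 * X.card ≤ Fintype.card V →
      h * ∑ x ∈ X, ∑ y, w x y ≤ ∑ x ∈ X, ∑ y ∈ Xᶜ, w x y)
    (f : V → ℝ) (hf : ∑ x, (∑ y, w x y) * f x = 0) :
    h ^ 2 / 4 * ∑ x, (∑ y, w x y) * f x ^ 2 ≤ ∑ x, ∑ y, w x y * (f x - f y) ^ 2 := by
  obtain ⟨c, hc1, hc2⟩ := exists_median f
  have P := dirichlet_of_nonneg w hw hs h hh (fun x => max (f x - c) 0)
    (fun x => le_max_right _ _) (fun X hX => H X (by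
      refine le_trans (Nat.mul_le_mul_left 2 (card_le_card (hX.trans ?_))) hc1
      intro x; simp))
  have Q := dirichlet_of_nonneg w hw hs h hh (fun x => max (c - f x) 0)
    (fun x => le_max_right _ _) (fun X hX => H X (by
      refine le_trans (Nat.mul_le_mul_left 2 (card_le_card (hX.trans ?_))) hc2
      intro x; simp))
  have sq : ∀ x, (max (f x - c) 0) ^ 2 + (max (c - f x) 0) ^ 2 = (f x - c) ^ 2 := fun x => by
    rcases le_total (f x) c with h0 | h0
    · rw [max_eq_right (by linarith), max_eq_left (by linarith)]; ring
    · rw [max_eq_left (by linarith), max_eq_right (by linarith)]; ring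
  have e1 : ∑ x, (∑ y, w x y) * f x ^ 2 ≤ ∑ x, (∑ y, w x y) * (max (f x - c) 0) ^ 2
      + ∑ x, (∑ y, w x y) * (max (c - f x) 0) ^ 2 := by
    have : ∑ x, (∑ y, w x y) * (max (f x - c) 0) ^ 2
        + ∑ x, (∑ y, w x y) * (max (c - f x) 0) ^ 2
        = ∑ x, (∑ y, w x y) * f x ^ 2 - 2 * c * ∑ x, (∑ y, w x y) * f x
          + ∑ x, (∑ y, w x y) * c ^ 2 := by
      rw [mul_sum, ← sum_add_distrib, ← sum_sub_distrib, ← sum_add_distrib]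
      refine sum_congr rfl fun x _ => ?_
      rw [← mul_add, sq]; ring
    rw [this, hf]
    have : 0 ≤ ∑ x, (∑ y, w x y) * c ^ 2 :=
      sum_nonneg fun x _ => mul_nonneg (sum_nonneg fun y _ => hw x y) (sq_nonneg _)
    linarith
  have e2 : ∑ x, ∑ y, w x y * (max (f x - c) 0 - max (f y - c) 0) ^ 2
      + ∑ x, ∑ y, w x y * (max (c - f x) 0 - max (c - f y) 0) ^ 2
      ≤ ∑ x, ∑ y, w x y * (f x - f y) ^ 2 := by
    rw [← sum_add_distrib]
    refine sum_le_sum fun x _ => ?_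
    rw [← sum_add_distrib]
    refine sum_le_sum fun y _ => ?_
    rw [← mul_add]
    refine mul_le_mul_of_nonneg_left ?_ (hw x y)
    rcases le_total (f x) c with h0 | h0 <;> rcases le_total (f y) c with h1 | h1
    · rw [max_eq_right (by linarith), max_eq_right (by linarith), max_eq_left (by linarith),
        max_eq_left (by linarith)]; nlinarith
    · rw [max_eq_right (by linarith), max_eq_left (by linarith), max_eq_left (by linarith),
        max_eq_right (by linarith)]; nlinarith
    · rw [max_eq_left (by linarith), max_eq_right (by linarith), max_eq_right (by linarith),
        max_eq_left (by linarith)]; nlinarith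
    · rw [max_eq_left (by linarith), max_eq_left (by linarith), max_eq_right (by linarith),
        max_eq_right (by linarith)]; nlinarith
  have := mul_le_mul_of_nonneg_left e1 (show 0 ≤ h ^ 2 / 4 by positivity)
  nlinarith

/-! ### Contraction away from the trivial eigenvectors -/

lemma quad_le [Nonempty V] (w : V → V → ℝ) (hw : ∀ x y, 0 ≤ w x y)
    (hs : ∀ x y, w x y = w y x) (h : ℝ) (hh : 0 ≤ h)
    (H : ∀ X : Finset V, 2 * X.card ≤ Fintype.card V →
      h * ∑ x ∈ X, ∑ y, w x y ≤ ∑ x ∈ X, ∑ y ∈ Xᶜ, w x y)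
    (f : V → ℝ) (hf : ∑ x, (∑ y, w x y) * f x = 0) :
    ∑ x, ∑ y, w x y * (f x * f y) ≤ (1 - h ^ 2 / 8) * ∑ x, (∑ y, w x y) * f x ^ 2 := by
  have c := cheeger w hw hs h hh H f hf
  have e : ∑ x, ∑ y, w x y * (f x - f y) ^ 2
      = ∑ x, ∑ y, (w x y * f x ^ 2 + w x y * f y ^ 2 - 2 * (w x y * (f x * f y))) :=
    sum_congr rfl fun x _ => sum_congr rfl fun y _ => by ring
  simp only [sum_add_distrib, sum_sub_distrib, ← mul_sum, sum_sum_left w (fun x => f x ^ 2),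
    sum_sum_right w hs (fun x => f x ^ 2)] at e
  nlinarith

/-- One step of the walk contracts the weighted `ℓ²` norm of a function orthogonal to `1` and to
the sign function `χ` of the bipartition. The quadratic form of the walk is bounded above by
`quad_le`, and below because multiplying by `χ` reverses its sign; as the walk operator is
self-adjoint, polarization turns this into a bound on its norm. Here `F` is the image of `f`. -/
lemma contraction [Nonempty V] (w : V → V → ℝ) (hw : ∀ x y, 0 ≤ w x y)
    (hs : ∀ x y, w x y = w y x) (h : ℝ) (hh : 0 ≤ h) (hρ : 0 < 1 - h ^ 2 / 8)
    (H : ∀ X : Finset V, 2 * X.card ≤ Fintype.card V →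
      h * ∑ x ∈ X, ∑ y, w x y ≤ ∑ x ∈ X, ∑ y ∈ Xᶜ, w x y)
    (χ : V → ℝ) (hχ : ∀ x, χ x ^ 2 = 1) (hwχ : ∀ x y, w x y * χ y = - (w x y * χ x))
    (f F : V → ℝ) (hf : ∑ x, (∑ y, w x y) * f x = 0)
    (hfχ : ∑ x, (∑ y, w x y) * (χ x * f x) = 0)
    (hF : ∀ x, (∑ y, w x y) * F x = ∑ y, w x y * f y) :
    ∑ x, (∑ y, w x y) * F x = 0 ∧ ∑ x, (∑ y, w x y) * (χ x * F x) = 0 ∧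
    ∑ x, (∑ y, w x y) * F x ^ 2 ≤
      (1 - h ^ 2 / 8) ^ 2 * ∑ x, (∑ y, w x y) * f x ^ 2 := by
  set ρ := 1 - h ^ 2 / 8 with hρd
  have F1 : ∑ x, (∑ y, w x y) * F x = 0 := by
    simp only [hF]; rw [sum_sum_right w hs f, hf]
  have F2 : ∑ x, (∑ y, w x y) * (χ x * F x) = 0 := by
    have : ∑ x, (∑ y, w x y) * (χ x * F x) = ∑ x, ∑ y, -(w x y * (χ y * f y)) := by
      refine sum_congr rfl fun x _ => ?_
      rw [mul_left_comm, hF, mul_sum]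
      refine sum_congr rfl fun y _ => ?_
      linear_combination f y * hwχ x y
    simp only [this, sum_neg_distrib, sum_sum_right w hs (fun y => χ y * f y), hfχ, neg_zero]
  refine ⟨F1, F2, ?_⟩
  have lin : ∀ s : ℝ, ∑ x, (∑ y, w x y) * (F x + s * f x)
      = ∑ x, (∑ y, w x y) * F x + s * ∑ x, (∑ y, w x y) * f x := fun s => by
    rw [mul_sum, ← sum_add_distrib]
    exact sum_congr rfl fun x _ => by ring
  have linχ : ∀ s : ℝ, ∑ x, (∑ y, w x y) * (χ x * (F x + s * f x))
      = ∑ x, (∑ y, w x y) * (χ x * F x) + s * ∑ x, (∑ y, w x y) * (χ x * f x) := fun s => by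
    rw [mul_sum, ← sum_add_distrib]
    exact sum_congr rfl fun x _ => by ring
  have up := quad_le w hw hs h hh H (fun x => F x + ρ * f x)
    (by rw [lin, F1, hf]; simp)
  have lo := quad_le w hw hs h hh H (fun x => χ x * (F x + -ρ * f x))
    (by rw [linχ, F2, hfχ]; simp)
  have lo1 : ∑ x, ∑ y, w x y * ((χ x * (F x + -ρ * f x)) * (χ y * (F y + -ρ * f y)))
      = - ∑ x, ∑ y, w x y * ((F x + -ρ * f x) * (F y + -ρ * f y)) := by
    rw [← sum_neg_distrib]
    refine sum_congr rfl fun x _ => ?_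
    rw [← sum_neg_distrib]
    refine sum_congr rfl fun y _ => ?_
    linear_combination (χ x * (F x + -ρ * f x) * (F y + -ρ * f y)) * hwχ x y
      - (w x y * (F x + -ρ * f x) * (F y + -ρ * f y)) * hχ x
  have lo2 : ∑ x, (∑ y, w x y) * (χ x * (F x + -ρ * f x)) ^ 2
      = ∑ x, (∑ y, w x y) * (F x + -ρ * f x) ^ 2 :=
    sum_congr rfl fun x _ => by rw [mul_pow, hχ, one_mul]
  have pol : ∑ x, ∑ y, w x y * ((F x + ρ * f x) * (F y + ρ * f y))
      - ∑ x, ∑ y, w x y * ((F x + -ρ * f x) * (F y + -ρ * f y))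
      = 4 * ρ * ∑ x, (∑ y, w x y) * F x ^ 2 := by
    have a1 : ∑ x, (∑ y, w x y) * F x ^ 2 = ∑ x, ∑ y, w x y * (F x * f y) := by
      refine sum_congr rfl fun x _ => ?_
      rw [pow_two, ← mul_assoc, hF, sum_mul]
      exact sum_congr rfl fun y _ => by ring
    have a2 : ∑ x, (∑ y, w x y) * F x ^ 2 = ∑ x, ∑ y, w x y * (f x * F y) := by
      rw [a1, sum_comm]
      exact sum_congr rfl fun x _ => sum_congr rfl fun y _ => by rw [hs]; ring
    have a3 : 4 * ρ * ∑ x, (∑ y, w x y) * F x ^ 2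
        = 2 * ρ * ∑ x, ∑ y, w x y * (F x * f y) + 2 * ρ * ∑ x, ∑ y, w x y * (f x * F y) := by
      rw [← a1, ← a2]; ring
    rw [a3]
    simp only [mul_sum, ← sum_sub_distrib, ← sum_add_distrib]
    exact sum_congr rfl fun x _ => sum_congr rfl fun y _ => by ring
  have par : ∑ x, (∑ y, w x y) * (F x + ρ * f x) ^ 2
      + ∑ x, (∑ y, w x y) * (F x + -ρ * f x) ^ 2
      = 2 * ∑ x, (∑ y, w x y) * F x ^ 2 + 2 * ρ ^ 2 * ∑ x, (∑ y, w x y) * f x ^ 2 := by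
    rw [mul_sum, mul_sum, ← sum_add_distrib, ← sum_add_distrib]
    exact sum_congr rfl fun x _ => by ring
  rw [lo1, lo2, ← hρd] at lo
  rw [← hρd] at up
  have fin : ρ * (4 * ∑ x, (∑ y, w x y) * F x ^ 2)
      ≤ ρ * (2 * ∑ x, (∑ y, w x y) * F x ^ 2
        + 2 * ρ ^ 2 * ∑ x, (∑ y, w x y) * f x ^ 2) := by
    rw [← par, mul_add]; linarith
  have := le_of_mul_le_mul_left fin hρ
  linarith

end Weighted

/-! ### From the graph to its weights -/

lemma sum_adj_eq_degree {V : Type} [Fintype V] (G : SimpleGraph V) (x : V) :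
    ∑ y, (if G.Adj x y then (1 : ℝ) else 0) = G.degree x := by
  rw [← sum_filter, sum_const, nsmul_eq_mul, mul_one, ← SimpleGraph.card_neighborFinset_eq_degree]
  congr 2
  ext y; simp

lemma crossCount_le {V : Type} [Fintype V] (G : SimpleGraph V) (X : Finset V) :
    (crossCount G X : ℝ) ≤ ∑ x ∈ X, ∑ y ∈ Xᶜ, (if G.Adj x y then (1 : ℝ) else 0) := by
  have h1 : G.edgeFinset.filter (fun e => ∃ a ∈ X, ∃ b ∈ Xᶜ, e = s(a, b))
      ⊆ ((X ×ˢ Xᶜ).filter (fun q => G.Adj q.1 q.2)).image (fun q => s(q.1, q.2)) := by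
    intro e he
    obtain ⟨he, a, ha, b, hb, rfl⟩ := mem_filter.1 he
    refine mem_image.2 ⟨(a, b), mem_filter.2 ⟨mem_product.2 ⟨ha, hb⟩, ?_⟩, rfl⟩
    simpa using he
  have h2 := (card_le_card h1).trans card_image_le
  calc (crossCount G X : ℝ) ≤ (((X ×ˢ Xᶜ).filter (fun q => G.Adj q.1 q.2)).card : ℝ) := by
        exact_mod_cast h2
    _ = _ := by
        rw [← sum_product', ← sum_filter, sum_const, nsmul_eq_mul, mul_one]

/-- For an almost-regular expander, edge boundaries are bounded below by `lam / K` times the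
volume, for sets of at most half the vertices. -/
lemma conductance {V : Type} [Fintype V] [Nonempty V] (K lam : ℝ) (hK : 1 ≤ K) (hlam : 0 < lam)
    (G : SimpleGraph V) (hreg : AlmostRegular K G) (hexp : IsExpander lam G)
    (X : Finset V) (hX : 2 * X.card ≤ Fintype.card V) :
    lam / K * ∑ x ∈ X, ∑ y, (if G.Adj x y then (1 : ℝ) else 0)
      ≤ ∑ x ∈ X, ∑ y ∈ Xᶜ, (if G.Adj x y then (1 : ℝ) else 0) := by
  have hK0 : 0 < K := by linarith
  have hX' : (X.card : ℝ) ≤ (Fintype.card V : ℝ) / 2 := by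
    have : (2 : ℝ) * X.card ≤ Fintype.card V := by exact_mod_cast hX
    linarith
  have h1 := (hexp X hX').le.trans (crossCount_le G X)
  refine le_trans ?_ h1
  have hn : (0 : ℝ) < Fintype.card V := by exact_mod_cast Fintype.card_pos
  have havg : (G.minDegree : ℝ) ≤ avgDeg G := by
    rw [avgDeg, le_div_iff₀ hn]
    calc (G.minDegree : ℝ) * Fintype.card V = ∑ _v : V, (G.minDegree : ℝ) := by
          simp [mul_comm]
      _ ≤ _ := sum_le_sum fun v _ => by exact_mod_cast G.minDegree_le_degree v
  have hvol : ∑ x ∈ X, ∑ y, (if G.Adj x y then (1 : ℝ) else 0) ≤ K * avgDeg G * X.card := by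
    calc _ ≤ ∑ _x ∈ X, K * avgDeg G := by
          refine sum_le_sum fun x _ => ?_
          rw [sum_adj_eq_degree]
          calc (G.degree x : ℝ) ≤ G.maxDegree := by exact_mod_cast G.degree_le_maxDegree x
            _ ≤ K * G.minDegree := hreg
            _ ≤ _ := by gcongr
      _ = _ := by rw [sum_const, nsmul_eq_mul]; ring
  calc _ ≤ lam / K * (K * avgDeg G * X.card) := by gcongr
    _ = _ := by field_simp

/-- Let `G` be a connected bipartite `K`-almost-regular `lam`-expander with
bipartition `{P, Pᶜ}`, `m` edges and no isolated vertices. Then for all vertices `v, u` and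
every `k ≥ 1`,
`|(M^k)_{v,u} − (d(u)/(2m))·(1 + (−1)^{k + 1_{v∈P} + 1_{u∈P}})| ≤ √K·(1 − (1/8)(lam/K)²)^k`. -/
theorem stmt_5 {V : Type} [Fintype V] (K lam : ℝ) (hK : 1 ≤ K) (hlam : 0 < lam)
    (G : SimpleGraph V) (P : Finset V)
    (hconn : G.Connected) (hbip : IsBipartition G P)
    (hiso : ∀ v : V, 0 < G.degree v)
    (hreg : AlmostRegular K G) (hexp : IsExpander lam G) :
    ∀ (v u : V) (k : ℕ), 1 ≤ k →
      |((transMat G ^ k) v u) - ((G.degree u : ℝ) / (2 * (G.edgeFinset.card : ℝ))) *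
          (1 + (-1 : ℝ) ^ (k + (if v ∈ P then 1 else 0) + (if u ∈ P then 1 else 0)))| ≤
        Real.sqrt K * (1 - (1 / 8) * (lam / K) ^ 2) ^ k := by
  intro v u k _
  have : Nonempty V := ⟨v⟩
  have hK0 : 0 < K := by linarith
  set w : V → V → ℝ := fun x y => if G.Adj x y then 1 else 0 with hwdef
  set h := lam / K with hhdef
  have hh : 0 < h := by positivity
  have hw : ∀ x y, 0 ≤ w x y := fun x y => by simp only [hwdef]; split_ifs <;> norm_num
  have hs : ∀ x y, w x y = w y x := fun x y => by simp only [hwdef, G.adj_comm]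
  have hd : ∀ x, ∑ y, w x y = G.degree x := sum_adj_eq_degree G
  have dpos : ∀ x, (0 : ℝ) < G.degree x := fun x => by exact_mod_cast hiso x
  have H : ∀ X : Finset V, 2 * X.card ≤ Fintype.card V →
      h * ∑ x ∈ X, ∑ y, w x y ≤ ∑ x ∈ X, ∑ y ∈ Xᶜ, w x y :=
    conductance K lam hK hlam G hreg hexp
  -- A singleton has conductance at most `1`, so the contraction factor is positive.
  have h1 : h ≤ 1 := by
    have hcard : 2 * ({v} : Finset V).card ≤ Fintype.card V := by
      have := G.degree_lt_card_verts v
      have := hiso v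
      simp only [card_singleton]; omega
    have := H {v} hcard
    rw [sum_singleton, sum_singleton] at this
    have le : ∑ y ∈ ({v} : Finset V)ᶜ, w v y ≤ ∑ y, w v y :=
      sum_le_sum_of_subset_of_nonneg (subset_univ _) fun y _ _ => hw v y
    rw [hd] at this le
    have := dpos v
    by_contra hc
    nlinarith
  have hρ : 0 < 1 - h ^ 2 / 8 := by nlinarith
  set χ : V → ℝ := fun x => if x ∈ P then -1 else 1 with hχdef
  have hχ : ∀ x, χ x ^ 2 = 1 := fun x => by simp only [hχdef]; split_ifs <;> norm_num
  have hwχ : ∀ x y, w x y * χ y = - (w x y * χ x) := fun x y => by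
    simp only [hwdef, hχdef]
    by_cases a : G.Adj x y
    · have := hbip x y a
      by_cases hy : y ∈ P <;> simp [a, hy, this]
    · simp [a]
  set T : ℝ := 2 * (G.edgeFinset.card : ℝ) with hT
  have sumd : ∑ x, (G.degree x : ℝ) = T := by
    rw [hT]; exact_mod_cast G.sum_degrees_eq_twice_card_edges
  have sumdχ : ∑ x, (G.degree x : ℝ) * χ x = 0 := by
    have a1 := sum_sum_left w χ
    have a2 := sum_sum_right w hs χ
    simp only [hwχ, sum_neg_distrib] at a2
    simp only [hd] at a1 a2
    linarith
  have Tpos : 0 < T := by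
    rw [← sumd]; exact sum_pos (fun x _ => dpos x) univ_nonempty
  -- The deviation of the law after `k` steps from its limit, as a function of the start.
  set R : ℕ → V → ℝ := fun k x => (transMat G ^ k) x u
    - (G.degree u : ℝ) / T * (1 + (-1) ^ k * χ x * χ u) with hR
  have step : ∀ k x, (∑ y, w x y) * R (k + 1) x = ∑ y, w x y * R k y := by
    intro k x
    have a1 : (G.degree x : ℝ) * (transMat G ^ (k + 1)) x u
        = ∑ y, w x y * (transMat G ^ k) y u := by
      rw [pow_succ', Matrix.mul_apply, mul_sum]
      refine sum_congr rfl fun y _ => ?_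
      rw [← mul_assoc]
      congr 1
      simp only [transMat, hwdef]
      have := (dpos x).ne'
      split_ifs <;> field_simp
      simp
    have a2 : ∑ y, w x y * R k y = ∑ y, w x y * (transMat G ^ k) y u
        - (∑ y, w x y) * ((G.degree u : ℝ) / T * (1 - (-1) ^ k * χ x * χ u)) := by
      rw [sum_mul, ← sum_sub_distrib]
      refine sum_congr rfl fun y _ => ?_
      simp only [hR]
      linear_combination (-(G.degree u : ℝ) / T * (-1) ^ k * χ u) * hwχ x y
    rw [a2, ← a1, hd]
    simp only [hR]
    ring
  have delta : ∀ c : V → ℝ, ∑ x, c x * (1 : Matrix V V ℝ) x u = c u := fun c => by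
    simp [Matrix.one_apply]
  have inv : ∀ k, ∑ x, (∑ y, w x y) * R k x = 0 ∧ ∑ x, (∑ y, w x y) * (χ x * R k x) = 0 ∧
      ∑ x, (∑ y, w x y) * R k x ^ 2 ≤ ((1 - h ^ 2 / 8) ^ k) ^ 2 * G.degree u := by
    intro k
    induction k with
    | zero =>
      simp only [hd]
      have T1 : (G.degree u : ℝ) / T * T = G.degree u := div_mul_cancel₀ _ Tpos.ne'
      set q : ℝ := (G.degree u : ℝ) / T with hq
      have qnn : 0 ≤ q := by positivity
      have hu := hχ u
      refine ⟨?_, ?_, ?_⟩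
      · have : ∑ x, (G.degree x : ℝ) * R 0 x
            = ∑ x, (G.degree x : ℝ) * (1 : Matrix V V ℝ) x u - q * ∑ x, (G.degree x : ℝ)
              - q * χ u * ∑ x, (G.degree x : ℝ) * χ x := by
          rw [mul_sum, mul_sum, ← sum_sub_distrib, ← sum_sub_distrib]
          refine sum_congr rfl fun x _ => ?_
          simp only [hR, pow_zero]; ring
        rw [this, delta (fun x => (G.degree x : ℝ)), sumd, sumdχ, T1]; ring
      · have : ∑ x, (G.degree x : ℝ) * (χ x * R 0 x)
            = ∑ x, ((G.degree x : ℝ) * χ x) * (1 : Matrix V V ℝ) x u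
              - q * ∑ x, (G.degree x : ℝ) * χ x - q * χ u * ∑ x, (G.degree x : ℝ) := by
          rw [mul_sum, mul_sum, ← sum_sub_distrib, ← sum_sub_distrib]
          refine sum_congr rfl fun x _ => ?_
          simp only [hR, pow_zero]
          linear_combination (-q * χ u * (G.degree x : ℝ)) * hχ x
        rw [this, delta (fun x => (G.degree x : ℝ) * χ x), sumd, sumdχ]
        linear_combination (-χ u) * T1
      · -- `R 0` is the projection of the indicator of `u`, so its norm does not exceed `d(u)`.
        have : ∑ x, (G.degree x : ℝ) * R 0 x ^ 2
            = ∑ x, ((G.degree x : ℝ) * (1 - 2 * q * (1 + χ x * χ u))) * (1 : Matrix V V ℝ) x u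
              + 2 * q ^ 2 * ∑ x, (G.degree x : ℝ)
              + 2 * q ^ 2 * χ u * ∑ x, (G.degree x : ℝ) * χ x := by
          rw [mul_sum, mul_sum, ← sum_add_distrib, ← sum_add_distrib]
          refine sum_congr rfl fun x _ => ?_
          have o : (1 : Matrix V V ℝ) x u ^ 2 = (1 : Matrix V V ℝ) x u := by
            rw [Matrix.one_apply]; split_ifs <;> norm_num
          simp only [hR, pow_zero]
          linear_combination (G.degree x : ℝ) * o
            + (G.degree x : ℝ) * q ^ 2 * χ u ^ 2 * hχ x + (G.degree x : ℝ) * q ^ 2 * hu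
        rw [this, delta (fun x => (G.degree x : ℝ) * (1 - 2 * q * (1 + χ x * χ u))), sumd,
          sumdχ]
        have e : χ u * χ u = 1 := by rw [← pow_two]; exact hu
        have p : 0 ≤ q * (G.degree u : ℝ) := by positivity
        have e2 : 2 * q ^ 2 * T = 2 * (q * G.degree u) := by rw [← T1]; ring
        rw [e, e2]
        simp only [pow_zero]
        nlinarith
    | succ k ih =>
      obtain ⟨i1, i2, i3⟩ := ih
      obtain ⟨j1, j2, j3⟩ := contraction w hw hs h hh.le hρ H χ hχ hwχ (R k) (R (k + 1)) i1 i2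
        (step k)
      refine ⟨j1, j2, j3.trans ?_⟩
      calc _ ≤ (1 - h ^ 2 / 8) ^ 2 * (((1 - h ^ 2 / 8) ^ k) ^ 2 * G.degree u) := by gcongr
        _ = _ := by ring
  have fin : (G.degree v : ℝ) * R k v ^ 2 ≤ ((1 - h ^ 2 / 8) ^ k) ^ 2 * G.degree u := by
    refine le_trans ?_ (inv k).2.2
    simp only [hd]
    exact single_le_sum (f := fun x => (G.degree x : ℝ) * R k x ^ 2)
      (fun x _ => by positivity) (mem_univ v)
  have duv : (G.degree u : ℝ) ≤ K * G.degree v :=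
    calc (G.degree u : ℝ) ≤ G.maxDegree := by exact_mod_cast G.degree_le_maxDegree u
      _ ≤ K * G.minDegree := hreg
      _ ≤ _ := by
        have : (G.minDegree : ℝ) ≤ G.degree v := by exact_mod_cast G.minDegree_le_degree v
        gcongr
  have fin2 : R k v ^ 2 ≤ K * ((1 - h ^ 2 / 8) ^ k) ^ 2 := by
    refine le_of_mul_le_mul_left (fin.trans ?_) (dpos v)
    calc _ ≤ ((1 - h ^ 2 / 8) ^ k) ^ 2 * (K * G.degree v) := by gcongr
      _ = _ := by ring
  have fin3 : |R k v| ≤ Real.sqrt K * (1 - h ^ 2 / 8) ^ k := by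
    have := Real.abs_le_sqrt fin2
    rwa [Real.sqrt_mul hK0.le, Real.sqrt_sq (by positivity)] at this
  have sgn : (-1 : ℝ) ^ (k + (if v ∈ P then 1 else 0) + (if u ∈ P then 1 else 0))
      = (-1) ^ k * χ v * χ u := by
    rw [pow_add, pow_add]
    simp only [hχdef]
    split_ifs <;> simp
  have ρe : 1 - (1 / 8) * h ^ 2 = 1 - h ^ 2 / 8 := by ring
  rw [sgn, ρe]
  exact fin3
end

section
/- Let G be a 1000-almost-regular bipartite graph on n vertices with bipartition (A, B), and let d := δ(G) ≥ 10^6. Then G contains an AB-star-forest F consisting of at least n/(100d) stars, each having at least d/10^6 leaves. -/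
/-!
The star forest is built greedily, with stars of exactly `t = ⌊d / 10 ^ 6⌋ + 1 ≤ 2 d / 10 ^ 6` leaves.
Suppose that `k < n / (100 d)` stars have been chosen and let `U` be the set of the `k t ≤ 2 n / 10 ^ 8`
leaves in use. If no unused vertex of `A` had `t` neighbours outside `U`, then each of them would send
at least `d - t` edges to `U`, while each vertex of `U` receives at most `1000 d` edges
(`edge_double_count`). Since `|B| ≤ 1000 |A|` by double counting the edges, this is impossible
(`greedy_arith`), so the forest can always be extended by one more star (`extend_forest`).
-/


open Finset
open scoped Classical

/-- The numerical contradiction behind the greedy step: `k` stars with `t` leaves each cannot absorb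
almost all edges leaving the `a - k` unused vertices of `A`. -/
lemma greedy_arith (a b k t d : ℝ) (hn : 0 < a + b) (hk : 0 ≤ k)
    (hd : 0 < d) (hab : b ≤ 1000 * a) (ht2 : t * 10 ^ 6 ≤ 2 * d)
    (hkn : k * (100 * d) < a + b) (hd6 : 10 ^ 6 ≤ d)
    (h : (a - k) * (d - t) ≤ k * t * (1000 * d)) : False := by
  have h1 : k * t * 10 ^ 6 ≤ k * (2 * d) := by nlinarith
  have h2 : k * t * 50000000 ≤ a + b := by linarith
  have h3 : k * 10 ^ 8 ≤ a + b := by nlinarith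
  have ha' : 0 < a := by linarith
  have h4 : 0 ≤ a - k := by linarith
  have h5 : (a - k) * (d / 2) ≤ (a - k) * (d - t) :=
    mul_le_mul_of_nonneg_left (by linarith) h4
  have h6 : d * ((a - k) / 2) ≤ d * (k * t * 1000) := by nlinarith
  have h7 := le_of_mul_le_mul_left h6 hd
  linarith

/-- Double counting: if every vertex of `S` has at least `m` neighbours in `T`, then
`|S| m ≤ |T| D`, where `D` bounds all degrees. -/
lemma edge_double_count {V : Type} [Fintype V] (G : SimpleGraph V) (S T : Finset V) (m D : ℕ)
    (hS : ∀ a ∈ S, m ≤ (G.neighborFinset a ∩ T).card) (hD : ∀ v, G.degree v ≤ D) :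
    S.card * m ≤ T.card * D := by
  refine Finset.card_mul_le_card_mul G.Adj (fun a ha => (hS a ha).trans ?_)
    (fun b _ => le_trans ?_ (hD b))
  · refine Finset.card_le_card fun x hx => ?_
    simp only [mem_inter, SimpleGraph.mem_neighborFinset] at hx
    simp [Finset.bipartiteAbove, hx]
  · rw [← SimpleGraph.card_neighborFinset_eq_degree]
    refine Finset.card_le_card fun x hx => ?_
    simp only [Finset.bipartiteBelow, mem_filter] at hx
    simpa using hx.2.symm

/-- An `AB`-star-forest with exactly `k` stars, each with exactly `t` leaves. -/
def HasForest {V : Type} (G : SimpleGraph V) (A B : Finset V) (t k : ℕ) : Prop :=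
  ∃ (roots : Finset V) (leaves : V → Finset V), roots ⊆ A ∧ roots.card = k ∧
    (∀ r ∈ roots, leaves r ⊆ B ∧ (leaves r).card = t ∧ ∀ b ∈ leaves r, G.Adj r b) ∧
    (∀ r ∈ roots, ∀ r' ∈ roots, r ≠ r' → Disjoint (leaves r) (leaves r'))

/-- The greedy step. Here `hcount` says that the `k t` leaves in use cannot absorb `d - t` edges from
each unused vertex of `A`. -/
lemma extend_forest {V : Type} [Fintype V] (G : SimpleGraph V) (A B : Finset V) (t k d D : ℕ)
    (hAB : ∀ a ∈ A, G.neighborFinset a ⊆ B) (hd : ∀ v, d ≤ G.degree v)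
    (hD : ∀ v, G.degree v ≤ D) (hcount : k * t * D < (A.card - k) * (d - t))
    (h : HasForest G A B t k) : HasForest G A B t (k + 1) := by
  obtain ⟨R, L, hRA, hRk, hL, hdj⟩ := h
  set U := R.biUnion L with hU
  have hUc : U.card ≤ k * t := by
    rw [← hRk]
    exact Finset.card_biUnion_le_card_mul _ _ _ fun r hr => (hL r hr).2.1.le
  have hex : ∃ a ∈ A \ R, t ≤ (G.neighborFinset a \ U).card := by
    by_contra! hno
    have h1 := edge_double_count G (A \ R) U (d - t) D (fun a ha => by
      have h2 := hno a ha
      have h3 := Finset.card_sdiff_add_card_inter (G.neighborFinset a) U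
      have h4 := hd a
      rw [← SimpleGraph.card_neighborFinset_eq_degree] at h4
      omega) hD
    rw [Finset.card_sdiff_of_subset hRA, hRk] at h1
    have h5 := Nat.mul_le_mul_right D hUc
    omega
  obtain ⟨a, ha, hat⟩ := hex
  obtain ⟨haA, haR⟩ := Finset.mem_sdiff.1 ha
  obtain ⟨S, hS, hSt⟩ := Finset.exists_subset_card_eq hat
  have hne : ∀ r ∈ R, r ≠ a := fun r hr h => haR (h ▸ hr)
  have hSL : ∀ r ∈ R, Disjoint S (L r) := fun r hr =>
    Finset.disjoint_left.2 fun x hx hx' =>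
      (Finset.mem_sdiff.1 (hS hx)).2 (Finset.mem_biUnion.2 ⟨r, hr, hx'⟩)
  refine ⟨insert a R, Function.update L a S, ?_, ?_, ?_, ?_⟩
  · exact Finset.insert_subset haA hRA
  · rw [Finset.card_insert_of_notMem haR, hRk]
  · intro r hr
    rcases Finset.mem_insert.1 hr with rfl | hr
    · rw [Function.update_self]
      exact ⟨fun x hx => hAB _ haA (Finset.mem_sdiff.1 (hS hx)).1, hSt,
        fun x hx => by simpa using (Finset.mem_sdiff.1 (hS hx)).1⟩
    · rw [Function.update_of_ne (hne r hr)]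
      exact hL r hr
  · intro r hr r' hr' hrr
    rcases Finset.mem_insert.1 hr with rfl | h1 <;> rcases Finset.mem_insert.1 hr' with rfl | h2
    · exact absurd rfl hrr
    · rw [Function.update_self, Function.update_of_ne (hne r' h2)]
      exact hSL r' h2
    · rw [Function.update_self, Function.update_of_ne (hne r h1)]
      exact (hSL r h1).symm
    · rw [Function.update_of_ne (hne r h1), Function.update_of_ne (hne r' h2)]
      exact hdj r h1 r' h2 hrr

/-- Let `G` be a `1000`-almost-regular bipartite graph on `n` vertices
with bipartition `(A, B)` and minimum degree `d ≥ 10^6`. Then `G` contains an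
`AB`-star-forest with at least `n/(100d)` stars, each having at least `d/10^6` leaves:
a set `roots ⊆ A` of star centres together with pairwise disjoint leaf sets
`leaves r ⊆ B` of neighbours of the respective roots. -/
theorem stmt_10 {V : Type} [Fintype V] (G : SimpleGraph V) (A B : Finset V)
    (hdisj : Disjoint A B) (hcover : A ∪ B = Finset.univ)
    (hbip : ∀ a b : V, G.Adj a b → (a ∈ A ↔ b ∈ B))
    (d : ℕ) (hd : G.minDegree = d) (hd6 : 10 ^ 6 ≤ d)
    (hreg : AlmostRegular 1000 G) :
    ∃ (roots : Finset V) (leaves : V → Finset V),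
      roots ⊆ A ∧
      (Fintype.card V : ℝ) / (100 * (d : ℝ)) ≤ (roots.card : ℝ) ∧
      (∀ r ∈ roots, leaves r ⊆ B ∧ (d : ℝ) / 10 ^ 6 ≤ ((leaves r).card : ℝ) ∧
        ∀ b ∈ leaves r, G.Adj r b) ∧
      (∀ r ∈ roots, ∀ r' ∈ roots, r ≠ r' → Disjoint (leaves r) (leaves r')) := by
  have hdeg : ∀ v, d ≤ G.degree v := fun v => hd ▸ G.minDegree_le_degree v
  have hDeg : ∀ v, G.degree v ≤ 1000 * d := fun v => by
    have h1 : (G.maxDegree : ℝ) ≤ 1000 * (d : ℝ) := by rw [← hd]; exact hreg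
    exact (G.degree_le_maxDegree v).trans (by exact_mod_cast h1)
  have hAB : ∀ a ∈ A, G.neighborFinset a ⊆ B := fun a ha x hx =>
    (hbip a x (by simpa using hx)).1 ha
  have hBA : ∀ b ∈ B, G.neighborFinset b ⊆ A := fun b hb x hx =>
    (hbip x b (by simpa [G.adj_comm] using hx)).2 hb
  have hcard : A.card + B.card = Fintype.card V := by
    rw [← Finset.card_union_of_disjoint hdisj, hcover, Finset.card_univ]
  have hn : 0 < Fintype.card V := by
    by_contra h0
    have : IsEmpty V := Fintype.card_eq_zero_iff.1 (by omega)
    simp at hd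
    omega
  have hb : B.card ≤ 1000 * A.card := by
    have h1 := edge_double_count G B A d (1000 * d) (fun b hb => by
      rw [Finset.inter_eq_left.2 (hBA b hb)]
      exact (hdeg b).trans_eq (SimpleGraph.card_neighborFinset_eq_degree G b).symm) hDeg
    exact Nat.le_of_mul_le_mul_right (a := B.card) (b := 1000 * A.card) (c := d) (by linarith) (by omega)
  set t : ℕ := d / 10 ^ 6 + 1 with ht
  have ht1 : d ≤ t * 10 ^ 6 := by omega
  have ht2 : t * 10 ^ 6 ≤ 2 * d := by omega
  have hdpos : (0 : ℝ) < d := by exact_mod_cast (by omega : 0 < d)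
  have hnR : (A.card : ℝ) + B.card = Fintype.card V := by exact_mod_cast hcard
  have hforest : ∀ k : ℕ, k * (100 * d) < Fintype.card V + 100 * d → HasForest G A B t k := by
    intro k
    induction k with
    | zero => exact fun _ => ⟨∅, fun _ => ∅, by simp, by simp, by simp, by simp⟩
    | succ k ih =>
      intro hk
      have hk' : k * (100 * d) < Fintype.card V := by linarith
      refine extend_forest G A B t k d (1000 * d) hAB hdeg hDeg ?_ (ih (by linarith))
      by_contra! hcon
      have hkA : k ≤ A.card := by
        have : k * 10 ^ 8 ≤ k * (100 * d) := Nat.mul_le_mul_left _ (by omega)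
        omega
      have htd : t ≤ d := by omega
      have hconR : ((A.card : ℝ) - k) * ((d : ℝ) - t) ≤ k * t * (1000 * d) := by
        rw [← Nat.cast_sub hkA, ← Nat.cast_sub htd]
        exact_mod_cast hcon
      refine greedy_arith A.card B.card k t d ?_ (by positivity) hdpos
        (by exact_mod_cast hb) (by exact_mod_cast ht2) ?_ (by exact_mod_cast hd6) hconR
      · rw [hnR]; exact_mod_cast hn
      · rw [hnR]; exact_mod_cast hk'
  have hceil := Nat.ceil_lt_add_one (a := (Fintype.card V : ℝ) / (100 * (d : ℝ))) (by positivity)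
  obtain ⟨R, L, hRA, hRk, hL, hdj⟩ :=
    hforest ⌈(Fintype.card V : ℝ) / (100 * (d : ℝ))⌉₊ (by
      have h100 : (0 : ℝ) < 100 * d := by positivity
      have h1 := mul_lt_mul_of_pos_right hceil h100
      rw [add_mul, div_mul_cancel₀ _ h100.ne', one_mul] at h1
      exact_mod_cast h1)
  refine ⟨R, L, hRA, ?_, fun r hr => ⟨(hL r hr).1, ?_, (hL r hr).2.2⟩, hdj⟩
  · rw [hRk]
    exact Nat.le_ceil _
  · rw [(hL r hr).2.1, div_le_iff₀ (by positivity)]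
    exact_mod_cast ht1
end

section
/- Let G be a 100-almost-regular bipartite graph on n vertices with bipartition (A, B), and let d := δ(G) ≥ 10^7. Then G contains d/10 root-disjoint AB-star-forests F_1, F_2, ..., F_{d/10}, where each F_i consists of at least n/(10^5·d) stars, each having at least d/10^7 leaves. -/
/-!
Everything is greedy. Write `n` for the number of vertices, and put `s = d / 10 ^ 7 + 1` and
`m = n / (10 ^ 5 * d) + 1` (integer divisions). Forests with exactly `m` stars of exactly `s`
leaves are built one after the other, and each forest star by star.

Counting edges between `A` and `B` gives `n ≤ 101 |A|`, and the neighbourhood of any vertex of `B`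
gives `d ≤ |A|`. So the at most `m * d / 10` roots used by earlier forests fill at most half of `A`
(`two_mul_used_le`). While a forest has `k < m` stars, its leaf set `L` has only `k * s` vertices,
which is a tiny fraction of `n`, so few edges meet `L`. If no star could be added, then every unused
`v ∈ A` would send more than `d - s ≥ d / 2` edges to `L`, which is too many
(`exists_extending_root`).
-/

open Finset
open scoped Classical

/-- A star-forest with root set `R`, all of whose stars have exactly `s` leaves; the star rooted at
`r ∈ R` has leaf set `L r`. The values of `L` outside `R` are irrelevant. -/
def IsStarForest {V : Type} (G : SimpleGraph V) (B : Finset V) (s : ℕ) (R : Finset V)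
    (L : V → Finset V) : Prop :=
  (∀ r ∈ R, L r ⊆ B ∧ (L r).card = s ∧ ∀ b ∈ L r, G.Adj r b) ∧
    ∀ r ∈ R, ∀ r' ∈ R, r ≠ r' → Disjoint (L r) (L r')

/-- If `W` is a set of vertices of degree at least `d`, each with fewer than `s` neighbours
outside `L`, then counting the edges between `W` and `L` bounds `|W|` by `|L|`. -/
lemma card_mul_le_of_few_outside {V : Type} [Fintype V] (G : SimpleGraph V) (d D s : ℕ)
    (hmin : ∀ v, d ≤ G.degree v) (hmax : ∀ v, G.degree v ≤ D) (W L : Finset V)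
    (h : ∀ v ∈ W, (G.neighborFinset v \ L).card < s) :
    W.card * (d - s) ≤ L.card * D := by
  refine Finset.card_mul_le_card_mul G.Adj (fun v hv => ?_) (fun b _ => ?_)
  · have h1 := h v hv
    have h2 := Finset.card_sdiff_add_card_inter (G.neighborFinset v) L
    have h3 : G.neighborFinset v ∩ L ⊆ Finset.bipartiteAbove G.Adj L v := by
      intro x hx
      simp only [Finset.mem_inter, SimpleGraph.mem_neighborFinset] at hx
      simp [Finset.bipartiteAbove, hx.1, hx.2]
    have h4 := Finset.card_le_card h3
    have h5 := hmin v
    rw [← SimpleGraph.card_neighborFinset_eq_degree] at h5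
    omega
  · refine le_trans (Finset.card_le_card ?_) (hmax b)
    intro x hx
    simp only [Finset.bipartiteBelow, Finset.mem_filter] at hx
    simpa using hx.2.symm

/-- A star with `s` leaves can be added outside the root set `X` and the leaf set `L`, as long as
`X` leaves over enough of `A` and `L` is small. -/
lemma exists_extending_root {V : Type} [Fintype V] (G : SimpleGraph V) (d s : ℕ) (hd0 : 0 < d)
    (hmin : ∀ v, d ≤ G.degree v) (hmax : ∀ v, G.degree v ≤ 100 * d) (hs : 2 * s ≤ d)
    (A X L : Finset V) (hX : 200 * L.card + X.card < A.card) :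
    ∃ v ∈ A, v ∉ X ∧ s ≤ (G.neighborFinset v \ L).card := by
  by_contra! hcon
  have key := card_mul_le_of_few_outside G d (100 * d) s hmin hmax (A \ X) L (by
    intro v hv
    rw [Finset.mem_sdiff] at hv
    exact hcon v hv.1 hv.2)
  have h1 : A.card - X.card ≤ (A \ X).card := Finset.le_card_sdiff X A
  have h2 : 200 * L.card + 1 ≤ (A \ X).card := by omega
  have h3 : d ≤ 2 * (d - s) := by omega
  have h4 := Nat.mul_le_mul h2 h3
  nlinarith

/-- One forest: for every root set `U` filling at most half of `A`, there is a star-forest with `k`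
stars of size `s` and roots in `A \ U`, provided `k` and `k * s` are small compared to `|A|`. -/
lemma exists_starForest {V : Type} [Fintype V] (G : SimpleGraph V) (A B : Finset V)
    (hN : ∀ v ∈ A, G.neighborFinset v ⊆ B) (d s : ℕ) (hd0 : 0 < d)
    (hmin : ∀ v, d ≤ G.degree v) (hmax : ∀ v, G.degree v ≤ 100 * d) (hs : 2 * s ≤ d)
    (U : Finset V) (hU : 2 * U.card ≤ A.card) (k : ℕ)
    (hk : ∀ j < k, 400 * (j * s) + 2 * j < A.card) :
    ∃ R L, R ⊆ A ∧ Disjoint U R ∧ R.card = k ∧ IsStarForest G B s R L := by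
  induction k with
  | zero => exact ⟨∅, fun _ => ∅, by simp, by simp, by simp, by simp [IsStarForest]⟩
  | succ k ih =>
    obtain ⟨R, L, hRA, hUR, hRk, hL, hLd⟩ := ih (fun j hj => hk j (by omega))
    have hc : (R.biUnion L).card ≤ k * s := by
      rw [← hRk]
      exact Finset.card_biUnion_le_card_mul _ _ _ (fun r hr => (hL r hr).2.1.le)
    have hX : (U ∪ R).card ≤ U.card + k := hRk ▸ Finset.card_union_le U R
    have := hk k (by omega)
    obtain ⟨v, hvA, hvX, hv⟩ := exists_extending_root G d s hd0 hmin hmax hs A (U ∪ R)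
      (R.biUnion L) (by omega)
    obtain ⟨T, hT, hTs⟩ := Finset.exists_subset_card_eq hv
    rw [Finset.mem_union, not_or] at hvX
    have hne : ∀ r ∈ R, r ≠ v := fun r hr h => hvX.2 (h ▸ hr)
    have hTd : ∀ r ∈ R, Disjoint T (L r) := by
      intro r hr
      rw [Finset.disjoint_left]
      intro x hx hxr
      have := Finset.mem_sdiff.1 (hT hx)
      exact this.2 (Finset.mem_biUnion.2 ⟨r, hr, hxr⟩)
    have hTN : T ⊆ G.neighborFinset v := hT.trans Finset.sdiff_subset
    refine ⟨insert v R, Function.update L v T, ?_, ?_, ?_, ?_, ?_⟩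
    · exact Finset.insert_subset hvA hRA
    · rw [Finset.disjoint_insert_right]
      exact ⟨hvX.1, hUR⟩
    · rw [Finset.card_insert_of_notMem hvX.2, hRk]
    · intro r hr
      rcases Finset.mem_insert.1 hr with rfl | hr
      · rw [Function.update_self]
        exact ⟨hTN.trans (hN _ hvA), hTs, fun b hb => by simpa using hTN hb⟩
      · rw [Function.update_of_ne (hne r hr)]
        exact hL r hr
    · intro r hr r' hr' hrr
      rcases Finset.mem_insert.1 hr with rfl | h1 <;> rcases Finset.mem_insert.1 hr' with rfl | h2
      · exact absurd rfl hrr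
      · rw [Function.update_self, Function.update_of_ne (hne r' h2)]
        exact hTd r' h2
      · rw [Function.update_self, Function.update_of_ne (hne r h1)]
        exact (hTd r h1).symm
      · rw [Function.update_of_ne (hne r h1), Function.update_of_ne (hne r' h2)]
        exact hLd r h1 r' h2 hrr

/-- Iteration: if a forest with `m` roots can be found outside any set `U` with `2 |U| ≤ |A|`, then
`t` root-disjoint forests exist whenever `2 t m ≤ |A|`. -/
lemma exists_rootDisjoint_family {V : Type} (A : Finset V) (m : ℕ)
    (P : Finset V → (V → Finset V) → Prop)
    (h : ∀ U : Finset V, 2 * U.card ≤ A.card → ∃ R L, Disjoint U R ∧ R.card = m ∧ P R L)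
    (t : ℕ) (ht : 2 * (t * m) ≤ A.card) :
    ∃ (R : Fin t → Finset V) (L : Fin t → V → Finset V),
      (∀ i j, i ≠ j → Disjoint (R i) (R j)) ∧ ∀ i, (R i).card = m ∧ P (R i) (L i) := by
  induction t with
  | zero => exact ⟨fun _ => ∅, fun _ _ => ∅, fun i => i.elim0, fun i => i.elim0⟩
  | succ t ih =>
    have hle : t * m ≤ (t + 1) * m := Nat.mul_le_mul_right m (Nat.le_succ t)
    obtain ⟨R, L, hR, hP⟩ := ih (by omega)
    have hc : (Finset.univ.biUnion R).card ≤ t * m := by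
      have := Finset.card_biUnion_le_card_mul Finset.univ R m (fun i _ => (hP i).1.le)
      simpa using this
    obtain ⟨R', L', hd, hcard, hP'⟩ := h (Finset.univ.biUnion R) (by omega)
    have hd' : ∀ i, Disjoint (R i) R' := fun i =>
      Finset.disjoint_of_subset_left (Finset.subset_biUnion_of_mem R (Finset.mem_univ i)) hd
    refine ⟨Fin.cons R' R, Fin.cons L' L, ?_, ?_⟩
    · intro i j
      refine Fin.cases ?_ (fun i => ?_) i <;> refine Fin.cases ?_ (fun j => ?_) j
      · exact fun h => absurd rfl h
      · exact fun _ => by simpa using (hd' j).symm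
      · exact fun _ => by simpa using hd' i
      · intro hij
        simpa using hR i j (fun h => hij (by rw [h]))
    · intro i
      refine Fin.cases ?_ (fun i => ?_) i
      · simpa using ⟨hcard, hP'⟩
      · simpa using hP i

/-- `d / 10` forests with `n / (10 ^ 5 * d) + 1` roots each use at most half of `A`. The `+ 1`
contributes `d / 10` roots, which is why `d ≤ |A|` is needed. -/
lemma two_mul_used_le (n d a : ℕ) (hn : n ≤ 101 * a) (hda : d ≤ a) :
    2 * (d / 10 * (n / (10 ^ 5 * d) + 1)) ≤ a := by
  have h1 : 10 ^ 5 * d * (n / (10 ^ 5 * d)) ≤ n := Nat.mul_div_le _ _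
  have h2 : 10 * (d / 10) ≤ d := Nat.mul_div_le _ _
  have h3 := Nat.mul_le_mul_right (n / (10 ^ 5 * d)) h2
  nlinarith

/-- At most `n / (10 ^ 5 * d)` stars of size `d / 10 ^ 7 + 1` are few enough, relative to `|A|`, for
`exists_starForest` to add a further one. -/
lemma occupied_lt (n d a j : ℕ) (hn : n ≤ 101 * a) (ha : 0 < a) (hd7 : 10 ^ 7 ≤ d)
    (hj : j < n / (10 ^ 5 * d) + 1) :
    400 * (j * (d / 10 ^ 7 + 1)) + 2 * j < a := by
  have h1 : j * (10 ^ 5 * d) ≤ n := (Nat.le_div_iff_mul_le (by omega)).1 (by omega)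
  have h2 : 10 ^ 7 * (d / 10 ^ 7 + 1) ≤ 2 * d := by omega
  have h3 := Nat.mul_le_mul_left j h2
  have h4 := Nat.mul_le_mul_left j hd7
  nlinarith

/-- Let `G` be a `100`-almost-regular bipartite graph on `n` vertices with
bipartition `(A, B)` and minimum degree `d ≥ 10^7`. Then `G` contains `d/10` root-disjoint
`AB`-star-forests, each consisting of at least `n/(10^5·d)` stars, each star having at least
`d/10^7` leaves. -/
theorem stmt_11 {V : Type} [Fintype V] (G : SimpleGraph V) (A B : Finset V)
    (hdisj : Disjoint A B) (hcover : A ∪ B = Finset.univ)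
    (hbip : ∀ a b : V, G.Adj a b → (a ∈ A ↔ b ∈ B))
    (d : ℕ) (hd : G.minDegree = d) (hd7 : 10 ^ 7 ≤ d)
    (hreg : AlmostRegular 100 G) :
    ∃ (roots : Fin (d / 10) → Finset V) (leaves : Fin (d / 10) → V → Finset V),
      (∀ i j : Fin (d / 10), i ≠ j → Disjoint (roots i) (roots j)) ∧
      ∀ i : Fin (d / 10),
        roots i ⊆ A ∧
        (Fintype.card V : ℝ) / (10 ^ 5 * (d : ℝ)) ≤ ((roots i).card : ℝ) ∧
        (∀ r ∈ roots i, leaves i r ⊆ B ∧ (d : ℝ) / 10 ^ 7 ≤ ((leaves i r).card : ℝ) ∧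
          ∀ b ∈ leaves i r, G.Adj r b) ∧
        (∀ r ∈ roots i, ∀ r' ∈ roots i, r ≠ r' → Disjoint (leaves i r) (leaves i r')) := by
  have hd0 : 0 < d := by omega
  have hmin : ∀ v, d ≤ G.degree v := fun v => hd ▸ G.minDegree_le_degree v
  have hmax : ∀ v, G.degree v ≤ 100 * d := by
    intro v
    refine (G.degree_le_maxDegree v).trans ?_
    have h : (G.maxDegree : ℝ) ≤ 100 * (G.minDegree : ℝ) := hreg
    rw [hd] at h
    exact_mod_cast h
  have hNA : ∀ v ∈ A, G.neighborFinset v ⊆ B := by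
    intro v hv x hx
    exact (hbip v x (by simpa using hx)).1 hv
  have hNB : ∀ v ∈ B, G.neighborFinset v ⊆ A := by
    intro v hv x hx
    have hx' : G.Adj v x := by simpa using hx
    exact (hbip x v hx'.symm).2 hv
  have hcard : Fintype.card V = A.card + B.card := by
    rw [← Finset.card_univ, ← hcover, Finset.card_union_of_disjoint hdisj]
  have hn : Fintype.card V ≤ 101 * A.card := by
    have h : B.card * d ≤ A.card * (100 * d) := by
      refine Finset.card_mul_le_card_mul G.Adj (fun v hv => ?_) (fun b _ => ?_)
      · refine (hmin v).trans (Finset.card_le_card fun x hx => ?_)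
        have hx' : G.Adj v x := by simpa using hx
        simp [Finset.bipartiteAbove, hx', hNB v hv hx]
      · refine (Finset.card_le_card fun x hx => ?_).trans (hmax b)
        simp only [Finset.bipartiteBelow, Finset.mem_filter] at hx
        simpa using hx.2.symm
    have : B.card ≤ A.card * 100 := by
      refine Nat.le_of_mul_le_mul_right ?_ hd0
      linarith
    omega
  have hne : Nonempty V := by
    by_contra hV
    rw [not_nonempty_iff] at hV
    have : G.minDegree = 0 := by simp
    omega
  have hBne : ∃ b, b ∈ B := by
    obtain ⟨v⟩ := hne
    have hv : v ∈ A ∪ B := hcover ▸ Finset.mem_univ v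
    rcases Finset.mem_union.1 hv with hv | hv
    · have : 0 < (G.neighborFinset v).card := hd0.trans_le (hmin v)
      obtain ⟨b, hb⟩ := Finset.card_pos.1 this
      exact ⟨b, hNA v hv hb⟩
    · exact ⟨v, hv⟩
  have hda : d ≤ A.card := by
    obtain ⟨b, hb⟩ := hBne
    exact (hmin b).trans (Finset.card_le_card (hNB b hb))
  obtain ⟨R, L, hR, hP⟩ := exists_rootDisjoint_family A (Fintype.card V / (10 ^ 5 * d) + 1)
    (fun R L => R ⊆ A ∧ IsStarForest G B (d / 10 ^ 7 + 1) R L)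
    (fun U hU => by
      obtain ⟨R, L, h1, h2, h3, h4⟩ := exists_starForest G A B hNA d (d / 10 ^ 7 + 1) hd0 hmin hmax
        (by omega) U hU (Fintype.card V / (10 ^ 5 * d) + 1)
        (fun j hj => occupied_lt _ d _ j hn (by omega) hd7 hj)
      exact ⟨R, L, h2, h3, h1, h4⟩)
    (d / 10) (two_mul_used_le _ d _ hn hda)
  refine ⟨R, L, hR, fun i => ?_⟩
  obtain ⟨hc, hRA, hL, hLd⟩ := hP i
  refine ⟨hRA, ?_, fun r hr => ⟨(hL r hr).1, ?_, (hL r hr).2.2⟩, hLd⟩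
  · rw [hc, div_le_iff₀ (by positivity)]
    have := (Nat.lt_div_mul_add (a := Fintype.card V) (b := 10 ^ 5 * d) (by omega)).le
    have h : Fintype.card V ≤ (Fintype.card V / (10 ^ 5 * d) + 1) * (10 ^ 5 * d) := by
      rw [add_mul, one_mul]; exact this
    exact_mod_cast h
  · rw [(hL r hr).2.1, div_le_iff₀ (by positivity)]
    have h : d ≤ (d / 10 ^ 7 + 1) * 10 ^ 7 := by omega
    exact_mod_cast h
end
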